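/- arXiv:1504.00395 — 4 statements merged into one kernel-verified Lean document; each statement's English description precedes it below -/
import Mathlib

section
/- Let f : S¹ → ℝ be continuously differentiable with ∫_{S¹} f(x) dx = 0, and suppose c* ∈ ℝ is such that f′(x) ≤ c* for all x ∈ S¹. Then sup_{x∈S¹} |f(x)| ≤ c* and ∫_{S¹} |f′(x)| dx ≤ 2c*. -/
/-!
On an interval of length one period, `f' ≤ c` keeps `f` below the line of slope `c` through its
left endpoint and above the line of slope `c` through its right endpoint. Integrating these two
comparisons over `[x, x + T]` and `[x - T, x]` bounds the distance from `f x` to the mean of `f`.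

Periodicity also gives `0 ≤ c` and `∫ f' = 0`, so integrating `|f'| ≤ 2 * c - f'` over a period
bounds `∫ |f'|`. Here `f'` is integrable because `c * x - f x` is monotone.
-/

open MeasureTheory Set

section Interval

variable {f : ℝ → ℝ} {a b c : ℝ}

theorem integral_le_of_deriv_le (hab : a ≤ b) (hcont : ContinuousOn f (Icc a b))
    (hdiff : DifferentiableOn ℝ f (Ioo a b)) (hderiv : ∀ x ∈ Ioo a b, deriv f x ≤ c) :
    ∫ x in a..b, f x ≤ (b - a) * f a + c * (b - a) ^ 2 / 2 := by
  rw [← interior_Icc] at hdiff hderiv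
  have f_le_line : ∀ x ∈ Icc a b, f x ≤ f a + c * (x - a) := fun x hx ↦
    sub_le_iff_le_add'.1 <| (convex_Icc a b).image_sub_le_mul_sub_of_deriv_le hcont hdiff hderiv
      a (left_mem_Icc.2 hab) x hx hx.1
  have line_integrable : IntervalIntegrable (fun x ↦ c * (x - a)) volume a b :=
    Continuous.intervalIntegrable (by fun_prop) a b
  calc ∫ x in a..b, f x
      ≤ ∫ x in a..b, (f a + c * (x - a)) :=
        intervalIntegral.integral_mono_on hab (hcont.intervalIntegrable_of_Icc hab)
          (intervalIntegrable_const.add line_integrable) f_le_line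
    _ = (b - a) * f a + c * (b - a) ^ 2 / 2 := by
        rw [intervalIntegral.integral_add intervalIntegrable_const line_integrable,
          intervalIntegral.integral_const, intervalIntegral.integral_const_mul,
          intervalIntegral.integral_comp_sub_right (fun x ↦ x), integral_id, smul_eq_mul]
        ring

theorem le_integral_of_deriv_le (hab : a ≤ b) (hcont : ContinuousOn f (Icc a b))
    (hdiff : DifferentiableOn ℝ f (Ioo a b)) (hderiv : ∀ x ∈ Ioo a b, deriv f x ≤ c) :
    (b - a) * f b - c * (b - a) ^ 2 / 2 ≤ ∫ x in a..b, f x := by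
  have neg_mem_Icc : MapsTo Neg.neg (Icc (-b) (-a)) (Icc a b) := fun x hx ↦
    ⟨le_neg_of_le_neg hx.2, neg_le.1 hx.1⟩
  have neg_mem_Ioo : MapsTo Neg.neg (Ioo (-b) (-a)) (Ioo a b) := fun x hx ↦
    ⟨lt_neg_of_lt_neg hx.2, neg_lt.1 hx.1⟩
  have reflected : ∫ x in -b..-a, -f (-x) ≤
      (-a - -b) * -f (- -b) + c * (-a - -b) ^ 2 / 2 :=
    integral_le_of_deriv_le (f := fun x ↦ -f (-x)) (neg_le_neg hab)
      (hcont.comp continuous_neg.continuousOn neg_mem_Icc).neg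
      (hdiff.comp differentiable_neg.differentiableOn neg_mem_Ioo).neg fun x hx ↦ by
        simpa only [deriv.fun_neg, deriv_comp_neg, neg_neg] using hderiv (-x) (neg_mem_Ioo hx)
  rw [intervalIntegral.integral_neg, intervalIntegral.integral_comp_neg, neg_neg, neg_neg]
    at reflected
  linarith

theorem intervalIntegrable_deriv_of_deriv_le (hab : a ≤ b) (hcont : ContinuousOn f (Icc a b))
    (hdiff : DifferentiableOn ℝ f (Ioo a b)) (hderiv : ∀ x ∈ Ioo a b, deriv f x ≤ c) :
    IntervalIntegrable (deriv f) volume a b := by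
  have hasDerivAt_sub : ∀ x ∈ Ioo a b, HasDerivAt (fun x ↦ c * x - f x) (c - deriv f x) x :=
    fun x hx ↦ (hasDerivAt_const_mul c).sub (hdiff.hasDerivAt (Ioo_mem_nhds hx.1 hx.2))
  have integrable_sub : IntervalIntegrable (fun x ↦ c - deriv f x) volume a b :=
    (intervalIntegrable_iff_integrableOn_Ioc_of_le hab).2 <|
      intervalIntegral.integrableOn_deriv_of_nonneg
        ((continuous_const_mul c).continuousOn.sub hcont) hasDerivAt_sub
        fun x hx ↦ sub_nonneg.2 (hderiv x hx)
  simpa only [sub_sub_cancel] using intervalIntegrable_const (c := c) |>.sub integrable_sub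

theorem integral_abs_deriv_le_of_deriv_le (hab : a ≤ b) (hcont : ContinuousOn f (Icc a b))
    (hdiff : DifferentiableOn ℝ f (Ioo a b)) (hderiv : ∀ x ∈ Ioo a b, deriv f x ≤ c)
    (hc : 0 ≤ c) :
    ∫ x in a..b, |deriv f x| ≤ 2 * c * (b - a) - (f b - f a) := by
  have deriv_integrable := intervalIntegrable_deriv_of_deriv_le hab hcont hdiff hderiv
  have abs_deriv_le : ∀ x ∈ Ioo a b, |deriv f x| ≤ 2 * c - deriv f x := fun x hx ↦
    abs_le.2 ⟨by linarith, by linarith [hderiv x hx]⟩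
  calc ∫ x in a..b, |deriv f x|
      ≤ ∫ x in a..b, (2 * c - deriv f x) :=
        intervalIntegral.integral_mono_on_of_le_Ioo hab deriv_integrable.abs
          (intervalIntegrable_const.sub deriv_integrable) abs_deriv_le
    _ = 2 * c * (b - a) - (f b - f a) := by
        rw [intervalIntegral.integral_sub intervalIntegrable_const deriv_integrable,
          intervalIntegral.integral_const, smul_eq_mul, mul_comm (b - a),
          intervalIntegral.integral_eq_sub_of_hasDerivAt_of_le hab hcont
            (fun x hx ↦ hdiff.hasDerivAt (Ioo_mem_nhds hx.1 hx.2)) deriv_integrable]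

end Interval

section Periodic

variable {f : ℝ → ℝ} {T c : ℝ}

theorem nonneg_of_periodic_of_deriv_le (hper : Function.Periodic f T) (hT : 0 < T)
    (hdiff : Differentiable ℝ f) (hderiv : ∀ x, deriv f x ≤ c) : 0 ≤ c := by
  have increment_le : f T - f 0 ≤ c * (T - 0) :=
    image_sub_le_mul_sub_of_deriv_le hdiff hderiv hT.le
  rw [hper.eq, sub_self, sub_zero] at increment_le
  exact nonneg_of_mul_nonneg_left increment_le hT

theorem abs_sub_intervalAverage_le_of_periodic_of_deriv_le (hper : Function.Periodic f T)
    (hT : 0 < T) (hdiff : Differentiable ℝ f) (hderiv : ∀ x, deriv f x ≤ c) (x : ℝ) :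
    |f x - ⨍ t in 0..T, f t| ≤ c * T / 2 := by
  have integral_period (a : ℝ) : ∫ t in a..a + T, f t = T * ⨍ t in 0..T, f t := by
    rw [hper.intervalIntegral_add_eq a 0, zero_add, interval_average_eq_div, sub_zero,
      mul_div_cancel₀ _ hT.ne']
  have upper := le_integral_of_deriv_le (a := x - T) (b := x - T + T) (by linarith)
    hdiff.continuous.continuousOn hdiff.differentiableOn fun t _ ↦ hderiv t
  have lower := integral_le_of_deriv_le (a := x) (b := x + T) (by linarith)
    hdiff.continuous.continuousOn hdiff.differentiableOn fun t _ ↦ hderiv t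
  rw [integral_period, add_sub_cancel_left] at upper lower
  rw [sub_add_cancel] at upper
  exact abs_le.2 ⟨le_of_mul_le_mul_left (by linarith) hT,
    le_of_mul_le_mul_left (by linarith) hT⟩

end Periodic

theorem stmt_1_general {f : ℝ → ℝ} {T c : ℝ} (hper : Function.Periodic f T) (hT : 0 < T)
    (hdiff : Differentiable ℝ f) (hderiv : ∀ x, deriv f x ≤ c) :
    (∀ x, |f x - ⨍ t in 0..T, f t| ≤ c * T / 2) ∧
      IntervalIntegrable (deriv f) volume 0 T ∧ ∫ x in 0..T, |deriv f x| ≤ 2 * c * T := by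
  have hc : 0 ≤ c := nonneg_of_periodic_of_deriv_le hper hT hdiff hderiv
  refine ⟨abs_sub_intervalAverage_le_of_periodic_of_deriv_le hper hT hdiff hderiv,
    intervalIntegrable_deriv_of_deriv_le hT.le hdiff.continuous.continuousOn
      hdiff.differentiableOn fun x _ ↦ hderiv x, ?_⟩
  simpa only [hper.eq, sub_self, sub_zero] using
    integral_abs_deriv_le_of_deriv_le hT.le hdiff.continuous.continuousOn
      hdiff.differentiableOn (fun x _ ↦ hderiv x) hc

/-- Lemma 4.1 of the paper: a C¹ function on the circle ℝ/ℤ with zero mean whose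
derivative is bounded above by `c` satisfies `|f|_∞ ≤ c` and `|f'|_{L¹} ≤ 2c`. -/
theorem stmt_1 (f : ℝ → ℝ) (hper : Function.Periodic f 1)
    (hf : ContDiff ℝ 1 f)
    (hmean : ∫ x in (0:ℝ)..1, f x = 0)
    (c : ℝ) (hc : ∀ x, deriv f x ≤ c) :
    (∀ x, |f x| ≤ c) ∧ (∫ x in (0:ℝ)..1, |deriv f x|) ≤ 2 * c := by
  have ⟨sup_le, _, integral_le⟩ :=
    stmt_1_general hper one_pos (hf.differentiable one_ne_zero) hc
  simp only [interval_average_eq_div, hmean, zero_div, sub_zero, mul_one] at sup_le integral_le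
  exact ⟨fun x ↦ by linarith [sup_le x, abs_nonneg (f x)], integral_le⟩
end

section
/- Let ν > 0, T > 0, and let v : [0,T] × S¹ → ℝ be continuous with continuous space derivative ∂_x v. Suppose w′, w″ : [0,T] × S¹ → ℝ are continuous, with continuous derivatives ∂_t w, ∂_x w, ∂_x² w on [0,T] × S¹, and both satisfy pointwise the perturbed Burgers equation ∂_t w − ν ∂_x² w + (1/2) ∂_x((w + v)²) = 0 together with the same initial condition w′(0,·) = w″(0,·). Then w′ = w″ on [0,T] × S¹. -/
open Set

/-!
The difference `u = w₁ - w₂` of two solutions solves the linear parabolic equation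
`u_t = ν u_xx - (w₂ + v) u_x - ∂ₓ(w₁ + v) u`, whose zeroth-order coefficient is bounded above by
some `K`. By periodicity `exp (-(K + 1) t) u` attains its maximum over `[0, T] × ℝ`. If this maximum
were positive it would be attained at a positive time, where the time derivative is nonnegative,
whereas the equation makes it negative. Hence `u ≤ 0`, and likewise `-u ≤ 0`.
-/

section Calculus

variable {f : ℝ → ℝ} {x : ℝ}

lemma deriv_deriv_nonpos_of_isLocalMax (hmax : IsLocalMax f x) (hf : ContinuousAt f x) :
    deriv (deriv f) x ≤ 0 := by
  by_contra! hpos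
  have hmin : IsLocalMin f x := isLocalMin_of_deriv_deriv_pos hpos hmax.deriv_eq_zero hf
  have hconst : f =ᶠ[nhds x] fun _ => f x := by
    filter_upwards [hmax, hmin] with y hle hge using le_antisymm hle hge
  have hzero : deriv (deriv f) x = 0 := by simpa using hconst.deriv.deriv_eq
  exact hpos.ne' hzero

lemma hasDerivWithinAt_nonneg_of_isLocalMaxOn_Iic {f' : ℝ} (hmax : IsLocalMaxOn f (Iic x) x)
    (hf : HasDerivWithinAt f f' (Iic x) x) : 0 ≤ f' := by
  have hcone : (-1 : ℝ) ∈ posTangentConeAt (Iic x) x := by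
    refine mem_posTangentConeAt_of_segment_subset ?_
    rw [segment_symm, segment_eq_Icc (by linarith)]
    exact Icc_subset_Iic_self
  simpa using hmax.hasFDerivWithinAt_nonpos hf.hasFDerivWithinAt hcone

lemma periodic_deriv {𝕜 F : Type*} [NontriviallyNormedField 𝕜] [NormedAddCommGroup F]
    [NormedSpace 𝕜 F] {g : 𝕜 → F} {c : 𝕜} (hg : Function.Periodic g c) :
    Function.Periodic (deriv g) c := fun y => by
  rw [← deriv_comp_add_const, funext hg]

end Calculus

lemma exists_forall_le_of_periodic {X α : Type*} [TopologicalSpace X] [LinearOrder α]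
    [TopologicalSpace α] [ClosedIciTopology α] {s : Set X} {f : X → ℝ → α} {L : ℝ}
    (hs : IsCompact s) (hne : s.Nonempty) (hL : 0 < L)
    (hper : ∀ t ∈ s, Function.Periodic (f t) L)
    (hcont : ContinuousOn (fun p : X × ℝ => f p.1 p.2) (s ×ˢ univ)) :
    ∃ t₀ ∈ s, ∃ x₀, ∀ t ∈ s, ∀ x, f t x ≤ f t₀ x₀ := by
  obtain ⟨⟨t₀, x₀⟩, ⟨ht₀, -⟩, hmax⟩ :=
    (hs.prod (isCompact_Icc (a := (0 : ℝ)) (b := L))).exists_isMaxOn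
      (hne.prod (nonempty_Icc.2 hL.le)) (hcont.mono (prod_mono_right (subset_univ _)))
  refine ⟨t₀, ht₀, x₀, fun t ht x => ?_⟩
  obtain ⟨y, hy, hxy⟩ := (hper t ht).exists_mem_Ico₀ hL x
  rw [hxy]
  exact isMaxOn_iff.1 hmax (t, y) ⟨ht, Ico_subset_Icc_self hy⟩

section MaximumPrinciple

variable {u : ℝ → ℝ → ℝ} {L T K : ℝ}

lemma nonpos_of_deriv_time_neg (hL : 0 < L)
    (hper : ∀ t ∈ Icc 0 T, Function.Periodic (u t) L)
    (hcont : ContinuousOn (fun p : ℝ × ℝ => u p.1 p.2) (Icc 0 T ×ˢ univ))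
    (hdiff : ∀ t ∈ Ioc 0 T, ∀ x, DifferentiableAt ℝ (fun s => u s x) t)
    (hneg : ∀ t ∈ Ioc 0 T, ∀ x, 0 < u t x → deriv (u t) x = 0 → deriv (deriv (u t)) x ≤ 0 →
      deriv (fun s => u s x) t < 0)
    (h0 : ∀ x, u 0 x ≤ 0) : ∀ t ∈ Icc 0 T, ∀ x, u t x ≤ 0 := by
  intro t ht x
  obtain ⟨t₀, ht₀, x₀, hmax⟩ := exists_forall_le_of_periodic isCompact_Icc ⟨t, ht⟩ hL hper hcont
  refine (hmax t ht x).trans (not_lt.1 fun hpos => ?_)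
  have ht₀_pos : 0 < t₀ := ht₀.1.lt_of_ne fun h => (h0 x₀).not_gt (h ▸ hpos)
  have hmax_space : IsLocalMax (u t₀) x₀ := .of_forall (hmax t₀ ht₀)
  have hmax_time : IsLocalMaxOn (fun s => u s x₀) (Iic t₀) t₀ := by
    filter_upwards [Icc_mem_nhdsLE ht₀_pos] with s hs
    exact hmax s ⟨hs.1, hs.2.trans ht₀.2⟩ x₀
  have hcont_space : Continuous (u t₀) :=
    hcont.comp_continuous (by fun_prop : Continuous fun y => (t₀, y)) fun y => ⟨ht₀, mem_univ y⟩
  have ht₀' : t₀ ∈ Ioc 0 T := ⟨ht₀_pos, ht₀.2⟩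
  have hnonneg : 0 ≤ deriv (fun s => u s x₀) t₀ :=
    hasDerivWithinAt_nonneg_of_isLocalMaxOn_Iic hmax_time
      (hdiff t₀ ht₀' x₀).hasDerivAt.hasDerivWithinAt
  exact hnonneg.not_gt <| hneg t₀ ht₀' x₀ hpos hmax_space.deriv_eq_zero
    (deriv_deriv_nonpos_of_isLocalMax hmax_space hcont_space.continuousAt)

lemma nonpos_of_deriv_time_le_mul (hL : 0 < L)
    (hper : ∀ t ∈ Icc 0 T, Function.Periodic (u t) L)
    (hcont : ContinuousOn (fun p : ℝ × ℝ => u p.1 p.2) (Icc 0 T ×ˢ univ))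
    (hdiff : ∀ t ∈ Ioc 0 T, ∀ x, DifferentiableAt ℝ (fun s => u s x) t)
    (hle : ∀ t ∈ Ioc 0 T, ∀ x, 0 < u t x → deriv (u t) x = 0 → deriv (deriv (u t)) x ≤ 0 →
      deriv (fun s => u s x) t ≤ K * u t x)
    (h0 : ∀ x, u 0 x ≤ 0) : ∀ t ∈ Icc 0 T, ∀ x, u t x ≤ 0 := by
  let E : ℝ → ℝ := fun t => Real.exp (-(K + 1) * t)
  have hE (t : ℝ) : 0 < E t := Real.exp_pos _
  have hE_deriv (t : ℝ) : HasDerivAt E (E t * -(K + 1)) t := by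
    simpa only [mul_one] using ((hasDerivAt_id' t).const_mul (-(K + 1))).exp
  suffices hweighted : ∀ t ∈ Icc 0 T, ∀ x, E t * u t x ≤ 0 from
    fun t ht x => nonpos_of_mul_nonpos_right (hweighted t ht x) (hE t)
  have hweighted_deriv : ∀ t ∈ Ioc 0 T, ∀ x, HasDerivAt (fun s => E s * u s x)
      (E t * (deriv (fun s => u s x) t - (K + 1) * u t x)) t := fun t ht x =>
    ((hE_deriv t).mul (hdiff t ht x).hasDerivAt).congr_deriv (by ring)
  refine nonpos_of_deriv_time_neg hL (fun t ht x => by rw [hper t ht x])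
    (ContinuousOn.mul (by fun_prop) hcont)
    (fun t ht x => (hweighted_deriv t ht x).differentiableAt) (fun t ht x hpos hx hxx => ?_)
    fun x => mul_nonpos_of_nonneg_of_nonpos (hE 0).le (h0 x)
  simp only [deriv_const_mul_field', mul_eq_zero, (hE t).ne', false_or] at hx hxx
  have hu : 0 < u t x := pos_of_mul_pos_right hpos (hE t).le
  have hu_t : deriv (fun s => u s x) t ≤ K * u t x :=
    hle t ht x hu hx (nonpos_of_mul_nonpos_right hxx (hE t))
  rw [(hweighted_deriv t ht x).deriv]
  exact mul_neg_of_pos_of_neg (hE t) (by linarith)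

variable {a b c : ℝ → ℝ → ℝ}

lemma nonpos_of_linear_parabolic_le (hL : 0 < L)
    (ha : ∀ t ∈ Ioc 0 T, ∀ x, 0 ≤ a t x) (hc : ∀ t ∈ Ioc 0 T, ∀ x, c t x ≤ K)
    (hper : ∀ t ∈ Icc 0 T, Function.Periodic (u t) L)
    (hcont : ContinuousOn (fun p : ℝ × ℝ => u p.1 p.2) (Icc 0 T ×ˢ univ))
    (hdiff : ∀ t ∈ Ioc 0 T, ∀ x, DifferentiableAt ℝ (fun s => u s x) t)
    (hle : ∀ t ∈ Ioc 0 T, ∀ x, deriv (fun s => u s x) t ≤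
      a t x * deriv (deriv (u t)) x + b t x * deriv (u t) x + c t x * u t x)
    (h0 : ∀ x, u 0 x ≤ 0) : ∀ t ∈ Icc 0 T, ∀ x, u t x ≤ 0 := by
  refine nonpos_of_deriv_time_le_mul (K := K) hL hper hcont hdiff (fun t ht x hu hx hxx => ?_) h0
  calc deriv (fun s => u s x) t
      ≤ a t x * deriv (deriv (u t)) x + b t x * deriv (u t) x + c t x * u t x := hle t ht x
    _ = a t x * deriv (deriv (u t)) x + c t x * u t x := by rw [hx, mul_zero, add_zero]
    _ ≤ c t x * u t x :=
      add_le_of_nonpos_left (mul_nonpos_of_nonneg_of_nonpos (ha t ht x) hxx)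
    _ ≤ K * u t x := mul_le_mul_of_nonneg_right (hc t ht x) hu.le

lemma eq_zero_of_linear_parabolic_eq (hL : 0 < L)
    (ha : ∀ t ∈ Ioc 0 T, ∀ x, 0 ≤ a t x) (hc : ∀ t ∈ Ioc 0 T, ∀ x, c t x ≤ K)
    (hper : ∀ t ∈ Icc 0 T, Function.Periodic (u t) L)
    (hcont : ContinuousOn (fun p : ℝ × ℝ => u p.1 p.2) (Icc 0 T ×ˢ univ))
    (hdiff : ∀ t ∈ Ioc 0 T, ∀ x, DifferentiableAt ℝ (fun s => u s x) t)
    (heq : ∀ t ∈ Ioc 0 T, ∀ x, deriv (fun s => u s x) t =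
      a t x * deriv (deriv (u t)) x + b t x * deriv (u t) x + c t x * u t x)
    (h0 : ∀ x, u 0 x = 0) : ∀ t ∈ Icc 0 T, ∀ x, u t x = 0 := by
  intro t ht x
  refine le_antisymm ?_ (neg_nonpos.1 ?_)
  · exact nonpos_of_linear_parabolic_le hL ha hc hper hcont hdiff
      (fun t ht x => (heq t ht x).le) (fun x => (h0 x).le) t ht x
  · refine nonpos_of_linear_parabolic_le (u := fun t x => -u t x) (b := b) hL ha hc
      (fun t ht => (hper t ht).comp Neg.neg) hcont.neg (fun t ht x => (hdiff t ht x).fun_neg)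
      (fun t ht x => ?_) (fun x => by rw [h0 x, neg_zero]) t ht x
    simp only [deriv.fun_neg, deriv.fun_neg', heq t ht x]
    linarith

end MaximumPrinciple

/-- Classical solutions on `[0, T] × ℝ/Lℤ` of the perturbed Burgers equation
`w_t - ν w_xx + ((w + v)² / 2)_x = 0`. Functions on the circle are represented as `L`-periodic
functions on `ℝ`, and the equation is only required at positive times. -/
structure IsPerturbedBurgersSolution (ν L T : ℝ) (v w : ℝ → ℝ → ℝ) : Prop where
  periodic : ∀ t ∈ Icc 0 T, Function.Periodic (w t) L
  continuousOn : ContinuousOn (fun p : ℝ × ℝ => w p.1 p.2) (Icc 0 T ×ˢ univ)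
  differentiableAt_time : ∀ t ∈ Ioc 0 T, ∀ x, DifferentiableAt ℝ (fun s => w s x) t
  differentiable_space : ∀ t ∈ Ioc 0 T, Differentiable ℝ (w t)
  differentiable_deriv_space : ∀ t ∈ Ioc 0 T, Differentiable ℝ (deriv (w t))
  equation : ∀ t ∈ Ioc 0 T, ∀ x, deriv (fun s => w s x) t - ν * deriv (deriv (w t)) x
    + (1 / 2) * deriv (fun y => (w t y + v t y) ^ 2) x = 0

namespace IsPerturbedBurgersSolution

variable {ν L T t : ℝ} {v w w₁ w₂ : ℝ → ℝ → ℝ}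

lemma of_forall_mem_Icc (hper : ∀ t ∈ Icc 0 T, Function.Periodic (w t) L)
    (hcont : ContinuousOn (fun p : ℝ × ℝ => w p.1 p.2) (Icc 0 T ×ˢ univ))
    (ht : ∀ x, ∀ t ∈ Icc 0 T, DifferentiableAt ℝ (fun s => w s x) t)
    (hx : ∀ t ∈ Icc 0 T, Differentiable ℝ (w t) ∧ Differentiable ℝ (deriv (w t)))
    (heq : ∀ t ∈ Icc 0 T, ∀ x, deriv (fun s => w s x) t - ν * deriv (deriv (w t)) x
      + (1 / 2) * deriv (fun y => (w t y + v t y) ^ 2) x = 0) :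
    IsPerturbedBurgersSolution ν L T v w where
  periodic := hper
  continuousOn := hcont
  differentiableAt_time t hmem x := ht x t (Ioc_subset_Icc_self hmem)
  differentiable_space t hmem := (hx t (Ioc_subset_Icc_self hmem)).1
  differentiable_deriv_space t hmem := (hx t (Ioc_subset_Icc_self hmem)).2
  equation t hmem := heq t (Ioc_subset_Icc_self hmem)

lemma deriv_time_eq (h : IsPerturbedBurgersSolution ν L T v w) (ht : t ∈ Ioc 0 T) {x : ℝ}
    (hv : DifferentiableAt ℝ (v t) x) :
    deriv (fun s => w s x) t = ν * deriv (deriv (w t)) x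
      - (w t x + v t x) * (deriv (w t) x + deriv (v t) x) := by
  have hw : DifferentiableAt ℝ (w t) x := h.differentiable_space t ht x
  have hsq : deriv (fun y => (w t y + v t y) ^ 2) x
      = 2 * (w t x + v t x) * (deriv (w t) x + deriv (v t) x) := by
    simpa using ((hw.hasDerivAt.fun_add hv.hasDerivAt).fun_pow 2).deriv
  have heq := h.equation t ht x
  rw [hsq] at heq
  linarith

lemma deriv_time_sub_eq (h₁ : IsPerturbedBurgersSolution ν L T v w₁)
    (h₂ : IsPerturbedBurgersSolution ν L T v w₂) (ht : t ∈ Ioc 0 T) {x : ℝ}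
    (hv : DifferentiableAt ℝ (v t) x) :
    deriv (fun s => w₁ s x - w₂ s x) t = ν * deriv (deriv fun y => w₁ t y - w₂ t y) x
      + -(w₂ t x + v t x) * deriv (fun y => w₁ t y - w₂ t y) x
      + -(deriv (w₁ t) x + deriv (v t) x) * (w₁ t x - w₂ t x) := by
  have hx : deriv (fun y => w₁ t y - w₂ t y) = fun y => deriv (w₁ t) y - deriv (w₂ t) y :=
    funext fun y => deriv_fun_sub (h₁.differentiable_space t ht y) (h₂.differentiable_space t ht y)
  rw [hx, deriv_fun_sub (h₁.differentiableAt_time t ht x) (h₂.differentiableAt_time t ht x),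
    deriv_fun_sub (h₁.differentiable_deriv_space t ht x) (h₂.differentiable_deriv_space t ht x),
    h₁.deriv_time_eq ht hv, h₂.deriv_time_eq ht hv]
  ring

end IsPerturbedBurgersSolution

theorem stmt_3_general {ν L T K : ℝ} (hν : 0 ≤ ν) (hL : 0 < L) {v w₁ w₂ : ℝ → ℝ → ℝ}
    (hv : ∀ t ∈ Ioc 0 T, Differentiable ℝ (v t))
    (h₁ : IsPerturbedBurgersSolution ν L T v w₁) (h₂ : IsPerturbedBurgersSolution ν L T v w₂)
    (hK : ∀ t ∈ Ioc 0 T, ∀ x, -(deriv (w₁ t) x + deriv (v t) x) ≤ K)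
    (h0 : ∀ x, w₁ 0 x = w₂ 0 x) :
    ∀ t ∈ Icc 0 T, ∀ x, w₁ t x = w₂ t x := fun t ht x =>
  sub_eq_zero.1 <| eq_zero_of_linear_parabolic_eq (u := fun t x => w₁ t x - w₂ t x) hL
    (fun _ _ _ => hν) hK (fun t ht => (h₁.periodic t ht).sub (h₂.periodic t ht))
    (h₁.continuousOn.sub h₂.continuousOn)
    (fun t ht x => (h₁.differentiableAt_time t ht x).fun_sub (h₂.differentiableAt_time t ht x))
    (fun t ht x => h₁.deriv_time_sub_eq h₂ ht (hv t ht x)) (fun x => sub_eq_zero.2 (h0 x)) t ht x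

/-- Uniqueness (Étape 0 of Theorem 3.4 of the paper): two classical solutions on
`[0,T] × S¹` (S¹ = ℝ/ℤ, functions represented as 1-periodic in space) of the perturbed
Burgers equation `w_t − ν w_xx + (1/2)((w+v)²)_x = 0` with the same initial data
coincide. -/
theorem stmt_3 (ν T : ℝ) (hν : 0 < ν) (hT : 0 < T)
    (v w₁ w₂ : ℝ → ℝ → ℝ)
    -- regularity of the coefficient v : continuous on [0,T] × S¹ with continuous ∂ₓv
    (hv_per : ∀ t, Function.Periodic (v t) 1)
    (hv_cont : ContinuousOn (fun p : ℝ × ℝ => v p.1 p.2) (Icc 0 T ×ˢ univ))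
    (hv_x : ∀ t ∈ Icc (0:ℝ) T, Differentiable ℝ (v t))
    (hv_x_cont : ContinuousOn (fun p : ℝ × ℝ => deriv (v p.1) p.2) (Icc 0 T ×ˢ univ))
    -- regularity of w₁ : continuous with continuous ∂ₜw₁, ∂ₓw₁, ∂ₓ²w₁ on [0,T] × S¹
    (hw₁_per : ∀ t, Function.Periodic (w₁ t) 1)
    (hw₁_cont : ContinuousOn (fun p : ℝ × ℝ => w₁ p.1 p.2) (Icc 0 T ×ˢ univ))
    (hw₁_t : ∀ x : ℝ, ∀ t ∈ Icc (0:ℝ) T, DifferentiableAt ℝ (fun s => w₁ s x) t)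
    (hw₁_t_cont : ContinuousOn (fun p : ℝ × ℝ => deriv (fun s => w₁ s p.2) p.1)
      (Icc 0 T ×ˢ univ))
    (hw₁_x : ∀ t ∈ Icc (0:ℝ) T, Differentiable ℝ (w₁ t) ∧ Differentiable ℝ (deriv (w₁ t)))
    (hw₁_x_cont : ContinuousOn (fun p : ℝ × ℝ => deriv (w₁ p.1) p.2) (Icc 0 T ×ˢ univ))
    (hw₁_xx_cont : ContinuousOn (fun p : ℝ × ℝ => deriv (deriv (w₁ p.1)) p.2)
      (Icc 0 T ×ˢ univ))
    -- regularity of w₂ : continuous with continuous ∂ₜw₂, ∂ₓw₂, ∂ₓ²w₂ on [0,T] × S¹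
    (hw₂_per : ∀ t, Function.Periodic (w₂ t) 1)
    (hw₂_cont : ContinuousOn (fun p : ℝ × ℝ => w₂ p.1 p.2) (Icc 0 T ×ˢ univ))
    (hw₂_t : ∀ x : ℝ, ∀ t ∈ Icc (0:ℝ) T, DifferentiableAt ℝ (fun s => w₂ s x) t)
    (hw₂_t_cont : ContinuousOn (fun p : ℝ × ℝ => deriv (fun s => w₂ s p.2) p.1)
      (Icc 0 T ×ˢ univ))
    (hw₂_x : ∀ t ∈ Icc (0:ℝ) T, Differentiable ℝ (w₂ t) ∧ Differentiable ℝ (deriv (w₂ t)))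
    (hw₂_x_cont : ContinuousOn (fun p : ℝ × ℝ => deriv (w₂ p.1) p.2) (Icc 0 T ×ˢ univ))
    (hw₂_xx_cont : ContinuousOn (fun p : ℝ × ℝ => deriv (deriv (w₂ p.1)) p.2)
      (Icc 0 T ×ˢ univ))
    -- both satisfy the perturbed Burgers equation pointwise on [0,T] × S¹
    (hw₁_eq : ∀ t ∈ Icc (0:ℝ) T, ∀ x : ℝ,
      deriv (fun s => w₁ s x) t - ν * deriv (deriv (w₁ t)) x
        + (1 / 2) * deriv (fun y => (w₁ t y + v t y) ^ 2) x = 0)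
    (hw₂_eq : ∀ t ∈ Icc (0:ℝ) T, ∀ x : ℝ,
      deriv (fun s => w₂ s x) t - ν * deriv (deriv (w₂ t)) x
        + (1 / 2) * deriv (fun y => (w₂ t y + v t y) ^ 2) x = 0)
    -- same initial condition
    (h0 : ∀ x : ℝ, w₁ 0 x = w₂ 0 x) :
    ∀ t ∈ Icc (0:ℝ) T, ∀ x : ℝ, w₁ t x = w₂ t x := by
  obtain ⟨t₀, -, x₀, hmax⟩ := exists_forall_le_of_periodic
    (f := fun t x => -(deriv (w₁ t) x + deriv (v t) x)) isCompact_Icc ⟨0, le_rfl, hT.le⟩ one_pos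
    (fun t _ => ((periodic_deriv (hw₁_per t)).add (periodic_deriv (hv_per t))).comp Neg.neg)
    (hw₁_x_cont.add hv_x_cont).neg
  exact stmt_3_general hν.le one_pos (fun t ht => hv_x t (Ioc_subset_Icc_self ht))
    (.of_forall_mem_Icc (fun t _ => hw₁_per t) hw₁_cont hw₁_t hw₁_x hw₁_eq)
    (.of_forall_mem_Icc (fun t _ => hw₂_per t) hw₂_cont hw₂_t hw₂_x hw₂_eq)
    (fun t ht => hmax t (Ioc_subset_Icc_self ht)) h0
end

section
/- Let ν > 0, T > 0, let u₀ : S¹ → ℝ be smooth with ∫_{S¹} u₀(x) dx = 0, and let η : [0,T] × S¹ → ℝ be smooth with ∫_{S¹} η(t,x) dx = 0 for every t. Then there exists exactly one function u : [0,T] × S¹ → ℝ which is continuous, has continuous derivatives ∂_t u, ∂_x u, ∂_x² u on [0,T] × S¹, satisfies pointwise u_t + u·u_x − ν·u_xx = η on [0,T] × S¹ and u(0,·) = u₀. Moreover, this solution satisfies ∫_{S¹} u(t,x) dx = 0 for all t ∈ [0,T]. -/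
open Set

/-- `u` is a classical solution of the periodic viscous Burgers equation
`u_t + u u_x − ν u_xx = η` on `[0,T] × S¹` (S¹ = ℝ/ℤ, functions 1-periodic in space),
with initial condition `u₀`: `u` is continuous with continuous derivatives
`∂ₜu`, `∂ₓu`, `∂ₓ²u` on `[0,T] × S¹` and satisfies the equation pointwise. -/
def IsClassicalBurgersSolution (ν T : ℝ) (η : ℝ → ℝ → ℝ) (u₀ : ℝ → ℝ)
    (u : ℝ → ℝ → ℝ) : Prop :=
  (∀ t ∈ Icc (0:ℝ) T, Function.Periodic (u t) 1) ∧
  ContinuousOn (fun p : ℝ × ℝ => u p.1 p.2) (Icc 0 T ×ˢ univ) ∧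
  (∀ x : ℝ, ∀ t ∈ Icc (0:ℝ) T, DifferentiableAt ℝ (fun s => u s x) t) ∧
  ContinuousOn (fun p : ℝ × ℝ => deriv (fun s => u s p.2) p.1) (Icc 0 T ×ˢ univ) ∧
  (∀ t ∈ Icc (0:ℝ) T, Differentiable ℝ (u t) ∧ Differentiable ℝ (deriv (u t))) ∧
  ContinuousOn (fun p : ℝ × ℝ => deriv (u p.1) p.2) (Icc 0 T ×ˢ univ) ∧
  ContinuousOn (fun p : ℝ × ℝ => deriv (deriv (u p.1)) p.2) (Icc 0 T ×ˢ univ) ∧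
  (∀ t ∈ Icc (0:ℝ) T, ∀ x : ℝ,
    deriv (fun s => u s x) t + u t x * deriv (u t) x - ν * deriv (deriv (u t)) x
      = η t x) ∧
  (∀ x : ℝ, u 0 x = u₀ x)

/-!
The Cole–Hopf substitution `u = -2ν φₓ / φ` turns the Burgers equation into the linear equation
`φ_t = ν φ_xx + W φ`, where `-2ν W` is a primitive of the forcing in space; `W` is periodic because
the forcing has zero mean, and `φ` starts from the exponential of a periodic primitive of
`u₀ / (-2ν)`. The Fourier modes of `φ` satisfy an infinite linear system of ordinary differential
equations, diagonal up to convolution with the rapidly decreasing coefficients of `W`. Written in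
Duhamel form it is a contraction on weighted bounded sequences, so the modes decay fast enough for
the series to be differentiated termwise. The minimum principle keeps `φ` positive, so that `u` is
defined, and `u` has zero mean because it is a multiple of the derivative of `log φ`.

The minimum principle also gives uniqueness: the difference of two solutions solves a linear
parabolic equation with zero initial data.
-/

section TimeCalculus

theorem hasDerivAt_exp_mul (r t : ℝ) :
    HasDerivAt (fun s => Real.exp (r * s)) (Real.exp (r * t) * r) t := by
  simpa only [mul_one] using ((hasDerivAt_id' t).const_mul r).exp

variable {E : Type*} [NormedAddCommGroup E] [NormedSpace ℝ E] [CompleteSpace E] {a b : ℝ}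

theorem exists_eqOn_Icc_forall_hasDerivAt {f f' : ℝ → E} (hab : a ≤ b)
    (hf' : ContinuousOn f' (Icc a b))
    (hf : ∀ t ∈ Icc a b, HasDerivWithinAt f (f' t) (Icc a b) t) :
    ∃ g : ℝ → E, EqOn g f (Icc a b) ∧ ∀ t, HasDerivAt g (f' (projIcc a b hab t)) t := by
  have hcont : Continuous fun s => f' (projIcc a b hab s) :=
    (continuousOn_iff_continuous_domRestrict.1 hf').comp continuous_projIcc
  refine ⟨fun t => f a + ∫ s in a..t, f' (projIcc a b hab s), fun t ht => ?_,
    fun t => (hcont.integral_hasStrictDerivAt a t).hasDerivAt.const_add (f a)⟩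
  have hderiv : ∀ s ∈ Ioo a t, HasDerivAt f (f' (projIcc a b hab s)) s := fun s hs => by
    have hs' : s ∈ Ioo a b := ⟨hs.1, hs.2.trans_le ht.2⟩
    rw [projIcc_of_mem hab (Ioo_subset_Icc_self hs')]
    exact (hf s (Ioo_subset_Icc_self hs')).hasDerivAt (Icc_mem_nhds hs'.1 hs'.2)
  have hfcont : ContinuousOn f (Icc a t) := fun s hs =>
    (hf s ⟨hs.1, hs.2.trans ht.2⟩).continuousWithinAt.mono (Icc_subset_Icc_right ht.2)
  simp only [intervalIntegral.integral_eq_sub_of_hasDerivAt_of_le ht.1 hfcont hderiv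
    (hcont.intervalIntegrable _ _), add_sub_cancel]

theorem hasDerivWithinAt_Icc_tsum {ι : Type*} {f f' : ι → ℝ → E} {u : ι → ℝ} {t : ℝ}
    (hu : Summable u) (hf' : ∀ i, ContinuousOn (f' i) (Icc a b))
    (hf : ∀ i, ∀ s ∈ Icc a b, HasDerivWithinAt (f i) (f' i s) (Icc a b) s)
    (hbound : ∀ i, ∀ s ∈ Icc a b, ‖f' i s‖ ≤ u i) (hsum : Summable fun i => f i a)
    (ht : t ∈ Icc a b) :
    HasDerivWithinAt (fun s => ∑' i, f i s) (∑' i, f' i t) (Icc a b) t := by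
  have hab : a ≤ b := ht.1.trans ht.2
  choose g hgf hg using fun i => exists_eqOn_Icc_forall_hasDerivAt hab (hf' i) (hf i)
  have hga : Summable fun i => g i a := hsum.congr fun i => (hgf i (left_mem_Icc.2 hab)).symm
  have hderiv := hasDerivAt_tsum hu hg (fun i s => hbound i _ (projIcc a b hab s).2) hga t
  simp only [projIcc_of_mem hab ht] at hderiv
  exact hderiv.hasDerivWithinAt.congr_of_mem
    (fun s hs => tsum_congr fun i => (hgf i hs).symm) ht

end TimeCalculus

/-- `u : ℝ → ℝ → E`, restricted to times in `[0, T]`, is 1-periodic in space and of class `C^{1,2}`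
(once in time, twice in space), with derivatives `∂ₜu = ut`, `∂ₓu = ux` and `∂ₓ²u = uxx`. The
derivatives are data, and the time derivative is one-sided at the endpoints, so that nothing has to
be said about times outside `[0, T]`. -/
structure PeriodicC12 {E : Type*} [NormedAddCommGroup E] [NormedSpace ℝ E] (T : ℝ)
    (u ut ux uxx : ℝ → ℝ → E) : Prop where
  periodic : ∀ t ∈ Icc 0 T, Function.Periodic (u t) 1
  continuousOn : ContinuousOn (fun p : ℝ × ℝ => u p.1 p.2) (Icc 0 T ×ˢ univ)
  continuousOn_time : ContinuousOn (fun p : ℝ × ℝ => ut p.1 p.2) (Icc 0 T ×ˢ univ)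
  continuousOn_space : ContinuousOn (fun p : ℝ × ℝ => ux p.1 p.2) (Icc 0 T ×ˢ univ)
  continuousOn_space₂ : ContinuousOn (fun p : ℝ × ℝ => uxx p.1 p.2) (Icc 0 T ×ˢ univ)
  hasDerivWithinAt_time : ∀ t ∈ Icc 0 T, ∀ x,
    HasDerivWithinAt (fun s => u s x) (ut t x) (Icc 0 T) t
  hasDerivAt_space : ∀ t ∈ Icc 0 T, ∀ x, HasDerivAt (u t) (ux t x) x
  hasDerivAt_space₂ : ∀ t ∈ Icc 0 T, ∀ x, HasDerivAt (ux t) (uxx t x) x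

section Slab

variable {E : Type*} [NormedAddCommGroup E] {T : ℝ}

theorem exists_norm_le_of_periodic_of_continuousOn {u : ℝ → ℝ → E}
    (hper : ∀ t ∈ Icc 0 T, Function.Periodic (u t) 1)
    (hu : ContinuousOn (fun p : ℝ × ℝ => u p.1 p.2) (Icc 0 T ×ˢ univ)) :
    ∃ M, ∀ t ∈ Icc 0 T, ∀ x, ‖u t x‖ ≤ M := by
  have hcompact : IsCompact (Icc (0 : ℝ) T ×ˢ Icc (0 : ℝ) 1) := isCompact_Icc.prod isCompact_Icc
  obtain ⟨M, hM⟩ := hcompact.exists_bound_of_continuousOn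
    (hu.mono (prod_mono le_rfl (subset_univ (Icc (0 : ℝ) 1))))
  refine ⟨M, fun t ht x => ?_⟩
  obtain ⟨y, hy, hxy⟩ := (hper t ht).exists_mem_Ico₀ one_pos x
  exact hxy ▸ hM (t, y) ⟨ht, Ico_subset_Icc_self hy⟩

variable [NormedSpace ℝ E]

theorem periodic_of_hasDerivAt {f f' : ℝ → E} {c : ℝ} (hf : Function.Periodic f c)
    (hderiv : ∀ x, HasDerivAt f (f' x) x) : Function.Periodic f' c := fun x => by
  have hshift : HasDerivAt f (f' (x + c)) x := by
    simpa only [funext hf] using (hderiv (x + c)).comp_add_const x c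
  exact hshift.unique (hderiv x)

end Slab

namespace PeriodicC12

variable {E F : Type*} [NormedAddCommGroup E] [NormedSpace ℝ E] [NormedAddCommGroup F]
  [NormedSpace ℝ F] {T : ℝ}

theorem periodic_space {u ut ux uxx : ℝ → ℝ → E} (hu : PeriodicC12 T u ut ux uxx) :
    ∀ t ∈ Icc 0 T, Function.Periodic (ux t) 1 := fun t ht =>
  periodic_of_hasDerivAt (hu.periodic t ht) (hu.hasDerivAt_space t ht)

theorem map {u ut ux uxx : ℝ → ℝ → E} (hu : PeriodicC12 T u ut ux uxx) (L : E →L[ℝ] F) :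
    PeriodicC12 T (fun t x => L (u t x)) (fun t x => L (ut t x)) (fun t x => L (ux t x))
      (fun t x => L (uxx t x)) where
  periodic t ht x := congrArg L (hu.periodic t ht x)
  continuousOn := L.continuous.comp_continuousOn hu.continuousOn
  continuousOn_time := L.continuous.comp_continuousOn hu.continuousOn_time
  continuousOn_space := L.continuous.comp_continuousOn hu.continuousOn_space
  continuousOn_space₂ := L.continuous.comp_continuousOn hu.continuousOn_space₂
  hasDerivWithinAt_time t ht x :=
    L.hasFDerivAt.comp_hasDerivWithinAt t (hu.hasDerivWithinAt_time t ht x)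
  hasDerivAt_space t ht x := L.hasFDerivAt.comp_hasDerivAt x (hu.hasDerivAt_space t ht x)
  hasDerivAt_space₂ t ht x := L.hasFDerivAt.comp_hasDerivAt x (hu.hasDerivAt_space₂ t ht x)

theorem congr_time {u ut vt ux uxx : ℝ → ℝ → E} (hu : PeriodicC12 T u ut ux uxx)
    (hvt : ∀ t ∈ Icc 0 T, ∀ x, vt t x = ut t x) : PeriodicC12 T u vt ux uxx where
  __ := hu
  continuousOn_time := hu.continuousOn_time.congr fun p hp => hvt p.1 hp.1 p.2
  hasDerivWithinAt_time t ht x := by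
    rw [hvt t ht x]
    exact hu.hasDerivWithinAt_time t ht x

theorem sub {u ut ux uxx v vt vx vxx : ℝ → ℝ → E} (hu : PeriodicC12 T u ut ux uxx)
    (hv : PeriodicC12 T v vt vx vxx) :
    PeriodicC12 T (fun t x => u t x - v t x) (fun t x => ut t x - vt t x)
      (fun t x => ux t x - vx t x) (fun t x => uxx t x - vxx t x) where
  periodic t ht := (hu.periodic t ht).sub (hv.periodic t ht)
  continuousOn := hu.continuousOn.sub hv.continuousOn
  continuousOn_time := hu.continuousOn_time.sub hv.continuousOn_time
  continuousOn_space := hu.continuousOn_space.sub hv.continuousOn_space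
  continuousOn_space₂ := hu.continuousOn_space₂.sub hv.continuousOn_space₂
  hasDerivWithinAt_time t ht x :=
    (hu.hasDerivWithinAt_time t ht x).sub (hv.hasDerivWithinAt_time t ht x)
  hasDerivAt_space t ht x := (hu.hasDerivAt_space t ht x).sub (hv.hasDerivAt_space t ht x)
  hasDerivAt_space₂ t ht x := (hu.hasDerivAt_space₂ t ht x).sub (hv.hasDerivAt_space₂ t ht x)

theorem sub_const {u ut ux uxx : ℝ → ℝ → E} (hu : PeriodicC12 T u ut ux uxx) (c : E) :
    PeriodicC12 T (fun t x => u t x - c) ut ux uxx where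
  periodic t ht x := congrArg (· - c) (hu.periodic t ht x)
  continuousOn := hu.continuousOn.sub continuousOn_const
  continuousOn_time := hu.continuousOn_time
  continuousOn_space := hu.continuousOn_space
  continuousOn_space₂ := hu.continuousOn_space₂
  hasDerivWithinAt_time t ht x := (hu.hasDerivWithinAt_time t ht x).sub_const c
  hasDerivAt_space t ht x := (hu.hasDerivAt_space t ht x).sub_const c
  hasDerivAt_space₂ := hu.hasDerivAt_space₂

theorem exp_smul {u ut ux uxx : ℝ → ℝ → E} (hu : PeriodicC12 T u ut ux uxx) (r : ℝ) :
    PeriodicC12 T (fun t x => Real.exp (r * t) • u t x)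
      (fun t x => Real.exp (r * t) • (ut t x + r • u t x))
      (fun t x => Real.exp (r * t) • ux t x) (fun t x => Real.exp (r * t) • uxx t x) where
  periodic t ht x := congrArg (Real.exp (r * t) • ·) (hu.periodic t ht x)
  continuousOn := ContinuousOn.smul (by fun_prop) hu.continuousOn
  continuousOn_time :=
    ContinuousOn.smul (by fun_prop) (hu.continuousOn_time.add (hu.continuousOn.const_smul r))
  continuousOn_space := ContinuousOn.smul (by fun_prop) hu.continuousOn_space
  continuousOn_space₂ := ContinuousOn.smul (by fun_prop) hu.continuousOn_space₂
  hasDerivWithinAt_time t ht x := by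
    refine ((hasDerivAt_exp_mul r t).hasDerivWithinAt.smul
      (hu.hasDerivWithinAt_time t ht x)).congr_deriv ?_
    rw [smul_add, mul_smul]
  hasDerivAt_space t ht x := (hu.hasDerivAt_space t ht x).const_smul _
  hasDerivAt_space₂ t ht x := (hu.hasDerivAt_space₂ t ht x).const_smul _

theorem div {f ft fx fxx g gt gx gxx : ℝ → ℝ → ℝ} (hf : PeriodicC12 T f ft fx fxx)
    (hg : PeriodicC12 T g gt gx gxx) (hg₀ : ∀ t ∈ Icc 0 T, ∀ x, g t x ≠ 0) :
    PeriodicC12 T (fun t x => f t x / g t x)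
      (fun t x => (ft t x * g t x - f t x * gt t x) / g t x ^ 2)
      (fun t x => (fx t x * g t x - f t x * gx t x) / g t x ^ 2)
      (fun t x => ((fxx t x * g t x - f t x * gxx t x) * g t x ^ 2
        - (fx t x * g t x - f t x * gx t x) * (2 * g t x * gx t x)) / (g t x ^ 2) ^ 2) := by
  have hg₀' : ∀ p ∈ Icc (0 : ℝ) T ×ˢ (univ : Set ℝ), g p.1 p.2 ≠ 0 := fun p hp =>
    hg₀ p.1 hp.1 p.2
  have hsq : ∀ p ∈ Icc (0 : ℝ) T ×ˢ (univ : Set ℝ), g p.1 p.2 ^ 2 ≠ 0 := fun p hp =>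
    pow_ne_zero 2 (hg₀' p hp)
  have hgsq := hg.continuousOn.pow 2
  have hnum := (hf.continuousOn_space.mul hg.continuousOn).sub
    (hf.continuousOn.mul hg.continuousOn_space)
  constructor
  · exact fun t ht => (hf.periodic t ht).div (hg.periodic t ht)
  · exact hf.continuousOn.div hg.continuousOn hg₀'
  · exact ((hf.continuousOn_time.mul hg.continuousOn).sub
      (hf.continuousOn.mul hg.continuousOn_time)).div hgsq hsq
  · exact hnum.div hgsq hsq
  · refine ContinuousOn.div (ContinuousOn.sub (ContinuousOn.mul ?_ hgsq) (hnum.mul ?_))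
      (hgsq.pow 2) fun p hp => pow_ne_zero 2 (hsq p hp)
    · exact (hf.continuousOn_space₂.mul hg.continuousOn).sub
        (hf.continuousOn.mul hg.continuousOn_space₂)
    · exact (continuousOn_const.mul hg.continuousOn).mul hg.continuousOn_space
  · exact fun t ht x =>
      (hf.hasDerivWithinAt_time t ht x).div (hg.hasDerivWithinAt_time t ht x) (hg₀ t ht x)
  · exact fun t ht x => (hf.hasDerivAt_space t ht x).div (hg.hasDerivAt_space t ht x) (hg₀ t ht x)
  · intro t ht x
    have hnum' := ((hf.hasDerivAt_space₂ t ht x).mul (hg.hasDerivAt_space t ht x)).sub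
      ((hf.hasDerivAt_space t ht x).mul (hg.hasDerivAt_space₂ t ht x))
    refine (hnum'.div ((hg.hasDerivAt_space t ht x).pow 2)
      (pow_ne_zero 2 (hg₀ t ht x))).congr_deriv ?_
    simp only [Pi.mul_apply, Pi.sub_apply, Pi.pow_apply]
    ring

end PeriodicC12

section ClassicalSolution

variable {ν T : ℝ} {η : ℝ → ℝ → ℝ} {u₀ : ℝ → ℝ}

theorem IsClassicalBurgersSolution.periodicC12 {u : ℝ → ℝ → ℝ}
    (hu : IsClassicalBurgersSolution ν T η u₀ u) :
    PeriodicC12 T u (fun t x => deriv (fun s => u s x) t) (fun t => deriv (u t))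
      (fun t => deriv (deriv (u t))) := by
  obtain ⟨hper, hcont, hdiff_t, hcont_t, hdiff_x, hcont_x, hcont_xx, -, -⟩ := hu
  exact
    { periodic := hper
      continuousOn := hcont
      continuousOn_time := hcont_t
      continuousOn_space := hcont_x
      continuousOn_space₂ := hcont_xx
      hasDerivWithinAt_time := fun t ht x => (hdiff_t x t ht).hasDerivAt.hasDerivWithinAt
      hasDerivAt_space := fun t ht x => ((hdiff_x t ht).1 x).hasDerivAt
      hasDerivAt_space₂ := fun t ht x => ((hdiff_x t ht).2 x).hasDerivAt }

-- A classical solution has two-sided time derivatives even at `t = 0` and `t = T`, so a function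
-- known only on `[0, T]` has to be continued past both ends.
theorem PeriodicC12.exists_hasDerivAt_time {E : Type*} [NormedAddCommGroup E] [NormedSpace ℝ E]
    [CompleteSpace E] {u ut ux uxx : ℝ → ℝ → E} (hu : PeriodicC12 T u ut ux uxx) (hT : 0 ≤ T) :
    ∃ v : ℝ → ℝ → E, (∀ t ∈ Icc 0 T, v t = u t) ∧
      ∀ t ∈ Icc 0 T, ∀ x, HasDerivAt (fun s => v s x) (ut t x) t := by
  have hut : ∀ x, ContinuousOn (fun t => ut t x) (Icc 0 T) := fun x =>
    hu.continuousOn_time.comp (by fun_prop : ContinuousOn (fun t : ℝ => (t, x)) (Icc 0 T))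
      fun t ht => ⟨ht, mem_univ x⟩
  choose g hgu hg using fun x =>
    exists_eqOn_Icc_forall_hasDerivAt hT (hut x) fun t ht => hu.hasDerivWithinAt_time t ht x
  refine ⟨fun t x => g x t, fun t ht => funext fun x => hgu x ht, fun t ht x => ?_⟩
  simpa only [projIcc_of_mem hT ht] using hg x t

theorem PeriodicC12.exists_isClassicalBurgersSolution {u ut ux uxx : ℝ → ℝ → ℝ}
    (hu : PeriodicC12 T u ut ux uxx) (hT : 0 ≤ T)
    (heq : ∀ t ∈ Icc 0 T, ∀ x, ut t x + u t x * ux t x - ν * uxx t x = η t x)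
    (h₀ : u 0 = u₀) :
    ∃ v, IsClassicalBurgersSolution ν T η u₀ v ∧ ∀ t ∈ Icc 0 T, v t = u t := by
  obtain ⟨v, hv, hvt⟩ := hu.exists_hasDerivAt_time hT
  have hvx : ∀ t ∈ Icc 0 T, deriv (v t) = ux t := fun t ht =>
    funext fun x => (hv t ht ▸ hu.hasDerivAt_space t ht x).deriv
  have hvxx : ∀ t ∈ Icc 0 T, deriv (deriv (v t)) = uxx t := fun t ht =>
    funext fun x => (hvx t ht ▸ hu.hasDerivAt_space₂ t ht x).deriv
  refine ⟨v, ⟨fun t ht => hv t ht ▸ hu.periodic t ht, ?_,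
    fun x t ht => (hvt t ht x).differentiableAt, ?_, fun t ht => ⟨fun x => ?_, fun x => ?_⟩,
    ?_, ?_, fun t ht x => ?_, fun x => ?_⟩, hv⟩
  · exact hu.continuousOn.congr fun p hp => congrFun (hv p.1 hp.1) p.2
  · exact hu.continuousOn_time.congr fun p hp => (hvt p.1 hp.1 p.2).deriv
  · exact hv t ht ▸ (hu.hasDerivAt_space t ht x).differentiableAt
  · exact hvx t ht ▸ (hu.hasDerivAt_space₂ t ht x).differentiableAt
  · exact hu.continuousOn_space.congr fun p hp => congrFun (hvx p.1 hp.1) p.2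
  · exact hu.continuousOn_space₂.congr fun p hp => congrFun (hvxx p.1 hp.1) p.2
  · rw [(hvt t ht x).deriv, hvxx t ht, hvx t ht, hv t ht]
    exact heq t ht x
  · rw [← h₀, hv 0 (left_mem_Icc.2 hT)]

end ClassicalSolution

section MinimumPrinciple

theorem nonneg_of_forall_le_of_hasDerivAt₂ {f f' : ℝ → ℝ} {f'' x : ℝ}
    (hf : ∀ y, HasDerivAt f (f' y) y) (hf' : HasDerivAt f' f'' x) (hmin : ∀ y, f x ≤ f y) :
    0 ≤ f'' := by
  have hderiv : deriv f = f' := funext fun y => (hf y).deriv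
  have hlocal : IsLocalMin f x := Filter.Eventually.of_forall hmin
  by_contra! hneg
  have hmax : IsLocalMax f x := isLocalMax_of_deriv_deriv_neg
    (by rwa [hderiv, hf'.deriv]) hlocal.deriv_eq_zero (hf x).continuousAt
  have hconst : f =ᶠ[nhds x] fun _ => f x :=
    hmax.mono fun y hy => le_antisymm hy (hmin y)
  have hf''₀ : f'' = 0 := by
    rw [← hf'.deriv, ← hderiv, hconst.deriv.deriv_eq]
    simp
  exact hneg.ne hf''₀

theorem nonpos_of_isMinOn_Icc_of_hasDerivWithinAt {f : ℝ → ℝ} {f' a b t : ℝ}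
    (hf : HasDerivWithinAt f f' (Icc a b) t) (hmin : IsMinOn f (Icc a b) t) (ht : t ∈ Icc a b)
    (hat : a < t) : f' ≤ 0 := by
  have hcone : a - t ∈ posTangentConeAt (Icc a b) t :=
    sub_mem_posTangentConeAt_of_segment_subset
      ((convex_Icc a b).segment_subset ht (left_mem_Icc.2 (ht.1.trans ht.2)))
  have hle : 0 ≤ (a - t) * f' := by
    simpa using hmin.localize.hasFDerivWithinAt_nonneg hf.hasFDerivWithinAt hcone
  nlinarith

variable {T ν M : ℝ} {w wt wx wxx c : ℝ → ℝ → ℝ}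

theorem PeriodicC12.exists_forall_le (hw : PeriodicC12 T w wt wx wxx) (hT : 0 ≤ T) :
    ∃ t₀ ∈ Icc 0 T, ∃ x₀, ∀ t ∈ Icc 0 T, ∀ x, w t₀ x₀ ≤ w t x := by
  have hcompact : IsCompact (Icc (0 : ℝ) T ×ˢ Icc (0 : ℝ) 1) := isCompact_Icc.prod isCompact_Icc
  obtain ⟨⟨t₀, x₀⟩, hmem, hmin⟩ := hcompact.exists_isMinOn
    ⟨(0, 0), ⟨left_mem_Icc.2 hT, left_mem_Icc.2 zero_le_one⟩⟩
    (hw.continuousOn.mono (prod_mono le_rfl (subset_univ _)))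
  refine ⟨t₀, hmem.1, x₀, fun t ht x => ?_⟩
  obtain ⟨y, hy, hxy⟩ := (hw.periodic t ht).exists_mem_Ico₀ one_pos x
  exact hxy ▸ hmin (show (t, y) ∈ _ from ⟨ht, Ico_subset_Icc_self hy⟩)

theorem PeriodicC12.nonneg_of_supersolution_of_neg (hw : PeriodicC12 T w wt wx wxx) (hν : 0 ≤ ν)
    (hc : ∀ t ∈ Icc 0 T, ∀ x, c t x < 0)
    (hsuper : ∀ t ∈ Icc 0 T, ∀ x, wx t x = 0 → ν * wxx t x + c t x * w t x ≤ wt t x)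
    (h₀ : ∀ x, 0 ≤ w 0 x) {t : ℝ} (ht : t ∈ Icc 0 T) (x : ℝ) : 0 ≤ w t x := by
  obtain ⟨t₀, ht₀, x₀, hmin⟩ := hw.exists_forall_le (ht.1.trans ht.2)
  refine le_trans ?_ (hmin t ht x)
  by_contra! hneg
  have ht₀_pos : 0 < t₀ := ht₀.1.lt_of_ne fun h => hneg.not_ge (h ▸ h₀ x₀)
  have hwx : wx t₀ x₀ = 0 :=
    IsLocalMin.hasDerivAt_eq_zero (Filter.Eventually.of_forall (hmin t₀ ht₀))
      (hw.hasDerivAt_space t₀ ht₀ x₀)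
  have hwxx : 0 ≤ wxx t₀ x₀ := nonneg_of_forall_le_of_hasDerivAt₂ (hw.hasDerivAt_space t₀ ht₀)
    (hw.hasDerivAt_space₂ t₀ ht₀ x₀) (hmin t₀ ht₀)
  have hwt : wt t₀ x₀ ≤ 0 := nonpos_of_isMinOn_Icc_of_hasDerivWithinAt
    (hw.hasDerivWithinAt_time t₀ ht₀ x₀) (fun t ht => hmin t ht x₀) ht₀ ht₀_pos
  have hreaction : 0 < c t₀ x₀ * w t₀ x₀ := mul_pos_of_neg_of_neg (hc t₀ ht₀ x₀) hneg
  linarith [hsuper t₀ ht₀ x₀ hwx, mul_nonneg hν hwxx]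

theorem PeriodicC12.nonneg_of_supersolution (hw : PeriodicC12 T w wt wx wxx) (hν : 0 ≤ ν)
    (hc : ∀ t ∈ Icc 0 T, ∀ x, c t x ≤ M)
    (hsuper : ∀ t ∈ Icc 0 T, ∀ x, wx t x = 0 → ν * wxx t x + c t x * w t x ≤ wt t x)
    (h₀ : ∀ x, 0 ≤ w 0 x) {t : ℝ} (ht : t ∈ Icc 0 T) (x : ℝ) : 0 ≤ w t x := by
  -- Multiplying by `exp (-(M + 1) t)` lowers the reaction coefficient by `M + 1`.
  refine (mul_nonneg_iff_of_pos_left (Real.exp_pos (-(M + 1) * t))).1 ?_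
  refine (hw.exp_smul (-(M + 1))).nonneg_of_supersolution_of_neg
    (c := fun t x => c t x - (M + 1)) hν (fun t ht x => by linarith [hc t ht x])
    (fun t ht x hx => ?_) (fun x => ?_) ht x
  · have hwx : wx t x = 0 := by simpa using hx
    have := mul_le_mul_of_nonneg_left (hsuper t ht x hwx) (Real.exp_pos (-(M + 1) * t)).le
    simp only [smul_eq_mul]
    linarith
  · simpa using h₀ x

theorem PeriodicC12.pos_of_heat_equation {W : ℝ → ℝ → ℝ} (hw : PeriodicC12 T w wt wx wxx)
    (hν : 0 ≤ ν) (hW : ∀ t ∈ Icc 0 T, ∀ x, |W t x| ≤ M)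
    (heat : ∀ t ∈ Icc 0 T, ∀ x, wt t x = ν * wxx t x + W t x * w t x)
    (hpos : ∀ x, 0 < w 0 x) {t : ℝ} (ht : t ∈ Icc 0 T) (x : ℝ) : 0 < w t x := by
  have h0 : (0 : ℝ) ∈ Icc 0 T := left_mem_Icc.2 (ht.1.trans ht.2)
  obtain ⟨y₀, -, hy₀⟩ := isCompact_Icc.exists_isMinOn (nonempty_Icc.2 (zero_le_one (α := ℝ)))
    (fun x _ => (hw.hasDerivAt_space 0 h0 x).continuousAt.continuousWithinAt)
  have hmin : ∀ x, w 0 y₀ ≤ w 0 x := fun x => by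
    obtain ⟨y, hy, hxy⟩ := (hw.periodic 0 h0).exists_mem_Ico₀ one_pos x
    exact hxy ▸ hy₀ (Ico_subset_Icc_self hy)
  -- `exp (M t) w` solves the heat equation with potential `W + M ≥ 0`, of which the constant
  -- `min w 0` is a subsolution.
  have hlower : 0 ≤ Real.exp (M * t) * w t x - w 0 y₀ := by
    refine ((hw.exp_smul M).sub_const (w 0 y₀)).nonneg_of_supersolution
      (M := 2 * M) (c := fun t x => W t x + M) hν
      (fun t ht x => by linarith [(abs_le.1 (hW t ht x)).2]) (fun t ht x _ => ?_)
      (fun x => by simpa using hmin x) ht x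
    have := mul_nonneg (by linarith [(abs_le.1 (hW t ht x)).1] : 0 ≤ W t x + M) (hpos y₀).le
    simp only [smul_eq_mul, heat t ht x]
    linarith
  exact (mul_pos_iff_of_pos_left (Real.exp_pos (M * t))).1 (by linarith [hpos y₀])

end MinimumPrinciple

section Uniqueness

variable {ν T : ℝ} {η : ℝ → ℝ → ℝ} {u₀ : ℝ → ℝ} {u v : ℝ → ℝ → ℝ}

namespace IsClassicalBurgersSolution

theorem le (hν : 0 ≤ ν) (hu : IsClassicalBurgersSolution ν T η u₀ u)
    (hv : IsClassicalBurgersSolution ν T η u₀ v) {t : ℝ} (ht : t ∈ Icc 0 T) (x : ℝ) :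
    u t x ≤ v t x := by
  obtain ⟨M, hM⟩ := exists_norm_le_of_periodic_of_continuousOn hu.periodicC12.periodic_space
    hu.periodicC12.continuousOn_space
  obtain ⟨-, -, -, -, -, -, -, hu_eq, hu₀⟩ := id hu
  obtain ⟨-, -, -, -, -, -, -, hv_eq, hv₀⟩ := id hv
  -- Where `uₓ = vₓ`, the difference of the nonlinear terms is `uₓ (v - u)`.
  refine sub_nonneg.1 ((hv.periodicC12.sub hu.periodicC12).nonneg_of_supersolution
    (c := fun t x => -deriv (u t) x) hν (fun t ht x => (neg_le_abs _).trans (hM t ht x))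
    (fun t ht x hx => ?_) (fun x => by simp [hu₀, hv₀]) ht x)
  have hv_eq' := hv_eq t ht x
  rw [sub_eq_zero.1 hx] at hv_eq'
  linarith [hu_eq t ht x]

theorem unique (hν : 0 ≤ ν) (hu : IsClassicalBurgersSolution ν T η u₀ u)
    (hv : IsClassicalBurgersSolution ν T η u₀ v) {t : ℝ} (ht : t ∈ Icc 0 T) (x : ℝ) :
    u t x = v t x :=
  (hu.le hν hv ht x).antisymm (hv.le hν hu ht x)

end IsClassicalBurgersSolution

end Uniqueness

section Duhamel

variable {E : Type*} [NormedAddCommGroup E] [NormedSpace ℝ E] {T : ℝ}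

theorem continuous_duhamel_integrand (hT : 0 ≤ T) (μ : ℝ) (F : C(Icc 0 T, E)) :
    Continuous fun s => Real.exp (μ * s) • F (projIcc 0 T hT s) :=
  (by fun_prop : Continuous fun s => Real.exp (μ * s)).smul (F.continuous.comp continuous_projIcc)

/-- The solution of `z' = -μ z + F`, `z 0 = b` on `[0, T]`, given by Duhamel's formula. The source
`F` is continued to `ℝ` by its endpoint values, which does not affect the integral. -/
noncomputable def duhamel (hT : 0 ≤ T) (μ : ℝ) (b : E) (F : C(Icc 0 T, E)) (t : ℝ) : E :=
  Real.exp (-μ * t) • (b + ∫ s in (0 : ℝ)..t, Real.exp (μ * s) • F (projIcc 0 T hT s))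

@[simp]
theorem duhamel_zero (hT : 0 ≤ T) (μ : ℝ) (b : E) (F : C(Icc 0 T, E)) :
    duhamel hT μ b F 0 = b := by
  simp [duhamel]

theorem duhamel_sub_duhamel (hT : 0 ≤ T) (μ : ℝ) (b : E) (F G : C(Icc 0 T, E)) (t : ℝ) :
    duhamel hT μ b F t - duhamel hT μ b G t = duhamel hT μ 0 (F - G) t := by
  simp only [duhamel, ContinuousMap.sub_apply, smul_sub (Real.exp (μ * _)), zero_add]
  rw [← smul_sub, intervalIntegral.integral_sub
    ((continuous_duhamel_integrand hT μ F).intervalIntegrable _ _)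
    ((continuous_duhamel_integrand hT μ G).intervalIntegrable _ _), add_sub_add_left_eq_sub]

theorem norm_duhamel_le (hT : 0 ≤ T) {μ c : ℝ} (hc : 0 < c) (hμ : c ≤ μ) (b : E)
    (F : C(Icc 0 T, E)) {t : ℝ} (ht : 0 ≤ t) : ‖duhamel hT μ b F t‖ ≤ ‖b‖ + ‖F‖ / c := by
  have hμ₀ : 0 < μ := hc.trans_le hμ
  have hintegral : ‖∫ s in (0 : ℝ)..t, Real.exp (μ * s) • F (projIcc 0 T hT s)‖
      ≤ Real.exp (μ * t) * (‖F‖ / c) := calc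
    _ ≤ ∫ s in (0 : ℝ)..t, Real.exp (μ * s) * ‖F‖ := by
      refine intervalIntegral.norm_integral_le_of_norm_le ht (.of_forall fun s _ => ?_)
        ((by fun_prop : Continuous fun s => Real.exp (μ * s) * ‖F‖).intervalIntegrable _ _)
      rw [norm_smul, Real.norm_eq_abs, Real.abs_exp]
      gcongr
      exact F.norm_coe_le_norm _
    _ = (Real.exp (μ * t) - 1) * (‖F‖ / μ) := by
      rw [intervalIntegral.integral_mul_const,
        intervalIntegral.integral_comp_mul_left (fun s => Real.exp s) hμ₀.ne', integral_exp,
        mul_zero, Real.exp_zero, smul_eq_mul]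
      ring
    _ ≤ Real.exp (μ * t) * (‖F‖ / c) := by
      gcongr
      linarith
  have hdecay : Real.exp (-μ * t) ≤ 1 := Real.exp_le_one_iff.2 (by nlinarith)
  have hcancel : Real.exp (-μ * t) * Real.exp (μ * t) = 1 := by
    rw [← Real.exp_add, neg_mul, neg_add_cancel, Real.exp_zero]
  calc ‖duhamel hT μ b F t‖
      ≤ Real.exp (-μ * t) * (‖b‖ + Real.exp (μ * t) * (‖F‖ / c)) := by
        rw [duhamel, norm_smul, Real.norm_eq_abs, Real.abs_exp]
        gcongr
        exact (norm_add_le _ _).trans (by gcongr)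
    _ = Real.exp (-μ * t) * ‖b‖ + ‖F‖ / c := by rw [mul_add, ← mul_assoc, hcancel, one_mul]
    _ ≤ ‖b‖ + ‖F‖ / c := by
        gcongr
        exact mul_le_of_le_one_left (norm_nonneg b) hdecay

variable [CompleteSpace E]

theorem hasDerivAt_duhamel (hT : 0 ≤ T) (μ : ℝ) (b : E) (F : C(Icc 0 T, E)) (t : ℝ) :
    HasDerivAt (duhamel hT μ b F) (-μ • duhamel hT μ b F t + F (projIcc 0 T hT t)) t := by
  have hintegral := (continuous_duhamel_integrand hT μ F).integral_hasStrictDerivAt 0 t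
  refine ((hasDerivAt_exp_mul (-μ) t).smul (hintegral.hasDerivAt.const_add b)).congr_deriv ?_
  rw [smul_smul, ← Real.exp_add, neg_mul, neg_add_cancel, Real.exp_zero, one_smul, duhamel,
    smul_smul, mul_comm (-μ), add_comm, neg_mul]

/-- Duhamel's formula as a map into `C([0, T], E)`. -/
noncomputable def duhamelMap (hT : 0 ≤ T) (μ : ℝ) (b : E) (F : C(Icc 0 T, E)) : C(Icc 0 T, E) where
  toFun t := duhamel hT μ b F t
  continuous_toFun := (continuous_iff_continuousAt.2 fun t =>
    (hasDerivAt_duhamel hT μ b F t).continuousAt).comp continuous_subtype_val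

theorem duhamelMap_apply (hT : 0 ≤ T) (μ : ℝ) (b : E) (F : C(Icc 0 T, E)) (t : Icc 0 T) :
    duhamelMap hT μ b F t = duhamel hT μ b F t := rfl

theorem norm_duhamelMap_le (hT : 0 ≤ T) {μ c : ℝ} (hc : 0 < c) (hμ : c ≤ μ) (b : E)
    (F : C(Icc 0 T, E)) : ‖duhamelMap hT μ b F‖ ≤ ‖b‖ + ‖F‖ / c :=
  (ContinuousMap.norm_le _ (by positivity)).2 fun t => norm_duhamel_le hT hc hμ b F t.2.1

theorem norm_duhamelMap_sub_le (hT : 0 ≤ T) {μ c : ℝ} (hc : 0 < c) (hμ : c ≤ μ) (b : E)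
    (F G : C(Icc 0 T, E)) :
    ‖duhamelMap hT μ b F - duhamelMap hT μ b G‖ ≤ ‖F - G‖ / c := by
  have hsub : duhamelMap hT μ b F - duhamelMap hT μ b G = duhamelMap hT μ 0 (F - G) :=
    ContinuousMap.ext fun t => duhamel_sub_duhamel hT μ b F G t
  simpa only [hsub, norm_zero, zero_add] using norm_duhamelMap_le hT hc hμ 0 (F - G)

end Duhamel

section LinearSystem

theorem summable_mul_of_norm_le {ι R : Type*} [NormedRing R] [CompleteSpace R] {a z : ι → R}
    {Z : ℝ} (ha : Summable fun j => ‖a j‖) (hz : ∀ j, ‖z j‖ ≤ Z) : Summable fun j => a j * z j :=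
  Summable.of_norm_bounded (ha.mul_right Z) fun j => (norm_mul_le _ _).trans (by gcongr; exact hz j)

theorem norm_tsum_mul_le {ι R : Type*} [NormedRing R] {a z : ι → R} {S Z : ℝ}
    (ha : Summable fun j => ‖a j‖) (hS : ∑' j, ‖a j‖ ≤ S) (hZ : 0 ≤ Z) (hz : ∀ j, ‖z j‖ ≤ Z) :
    ‖∑' j, a j * z j‖ ≤ S * Z := calc
  ‖∑' j, a j * z j‖ ≤ (∑' j, ‖a j‖) * Z := tsum_of_norm_bounded (ha.hasSum.mul_right Z)
      fun j => (norm_mul_le _ _).trans (by gcongr; exact hz j)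
  _ ≤ S * Z := by gcongr

variable {ι A : Type*} [NormedRing A] [NormedAlgebra ℝ A] [CompleteSpace A] {T : ℝ} {μ : ι → ℝ}
  {b : ι → A} {B S : ℝ}

theorem exists_duhamelMap_fixedPoint {a : ι → ι → C(Icc 0 T, A)} {c : ℝ} (hT : 0 ≤ T)
    (hS₀ : 0 ≤ S) (hSc : S < c) (hμ : ∀ k, c ≤ μ k) (hb : ∀ k, ‖b k‖ ≤ B)
    (ha : ∀ k, Summable fun j => ‖a k j‖) (hS : ∀ k, ∑' j, ‖a k j‖ ≤ S) :
    ∃ z : ι → C(Icc 0 T, A), (∃ Z, ∀ k, ‖z k‖ ≤ Z) ∧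
      ∀ k, z k = duhamelMap hT (μ k) (b k) (∑' j, a k j * z j) := by
  have hc : 0 < c := hS₀.trans_lt hSc
  have hcoord (z : lp (fun _ : ι => C(Icc 0 T, A)) ⊤) (k : ι) : ‖z k‖ ≤ ‖z‖ :=
    lp.norm_apply_le_norm ENNReal.top_ne_zero z k
  have hΦ_mem (z : lp (fun _ : ι => C(Icc 0 T, A)) ⊤) :
      Memℓp (fun k => duhamelMap hT (μ k) (b k) (∑' j, a k j * z j)) ⊤ := by
    refine memℓp_infty ⟨B + S * ‖z‖ / c, ?_⟩
    rintro _ ⟨k, rfl⟩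
    refine (norm_duhamelMap_le hT hc (hμ k) _ _).trans ?_
    gcongr
    · exact hb k
    · exact norm_tsum_mul_le (ha k) (hS k) (norm_nonneg z) (hcoord z)
  let Φ (z : lp (fun _ : ι => C(Icc 0 T, A)) ⊤) : lp (fun _ : ι => C(Icc 0 T, A)) ⊤ :=
    ⟨_, hΦ_mem z⟩
  have hΦ : ContractingWith (NNReal.mk (S / c) (by positivity)) Φ := by
    refine ⟨NNReal.coe_lt_coe.1 ((div_lt_one hc).2 hSc), LipschitzWith.of_dist_le_mul fun y z => ?_⟩
    rw [dist_eq_norm, dist_eq_norm, NNReal.coe_mk, div_mul_eq_mul_div]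
    refine lp.norm_le_of_forall_le (by positivity) fun k => ?_
    refine (norm_duhamelMap_sub_le hT hc (hμ k) _ _ _).trans ?_
    rw [← (summable_mul_of_norm_le (ha k) (hcoord y)).tsum_sub
      (summable_mul_of_norm_le (ha k) (hcoord z))]
    simp only [← mul_sub]
    gcongr
    exact norm_tsum_mul_le (ha k) (hS k) (norm_nonneg _) (hcoord (y - z))
  obtain ⟨z, hz, -⟩ := hΦ.exists_fixedPoint 0 (edist_ne_top _ _)
  exact ⟨z, ⟨‖z‖, hcoord z⟩,
    fun k => (congrArg (fun y : lp (fun _ : ι => C(Icc 0 T, A)) ⊤ => y k) hz).symm⟩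

theorem exists_solution_of_dissipative {a : ι → ι → C(Icc 0 T, A)} {c : ℝ} (hT : 0 ≤ T)
    (hS₀ : 0 ≤ S) (hSc : S < c) (hμ : ∀ k, c ≤ μ k) (hb : ∀ k, ‖b k‖ ≤ B)
    (ha : ∀ k, Summable fun j => ‖a k j‖) (hS : ∀ k, ∑' j, ‖a k j‖ ≤ S) :
    ∃ α : ι → ℝ → A, (∀ k, α k 0 = b k) ∧ (∃ C, ∀ k, ∀ t ∈ Icc 0 T, ‖α k t‖ ≤ C) ∧
      ∀ k (t : Icc 0 T), HasDerivAt (α k) (-μ k • α k t + ∑' j, a k j t * α j t) t := by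
  obtain ⟨z, ⟨Z, hZ⟩, hz⟩ := exists_duhamelMap_fixedPoint hT hS₀ hSc hμ hb ha hS
  have hα : ∀ k (t : Icc 0 T), duhamel hT (μ k) (b k) (∑' j, a k j * z j) t = z k t :=
    fun k t => by rw [← duhamelMap_apply, ← hz k]
  have hforcing : ∀ k (t : Icc 0 T), (∑' j, a k j * z j) t = ∑' j, a k j t * z j t := by
    intro k t
    have hsum := summable_mul_of_norm_le (ha k) hZ
    exact (ContinuousMap.tsum_apply hsum t).symm
  refine ⟨fun k => duhamel hT (μ k) (b k) (∑' j, a k j * z j), fun k => duhamel_zero ..,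
    ⟨Z, fun k t ht => ?_⟩, fun k t => (hasDerivAt_duhamel hT _ _ _ t).congr_deriv ?_⟩
  · simpa only [hα k ⟨t, ht⟩] using ((z k).norm_coe_le_norm ⟨t, ht⟩).trans (hZ k)
  · simp only [projIcc_val, hα, hforcing]

theorem exists_solution_infinite_linear_system {a : ι → ι → ℝ → A} {m : ι → ι → ℝ} (hT : 0 ≤ T)
    (hS₀ : 0 ≤ S) (hμ : ∀ k, 0 ≤ μ k) (hb : ∀ k, ‖b k‖ ≤ B)
    (ha : ∀ k j, ContinuousOn (a k j) (Icc 0 T)) (ham : ∀ k j, ∀ t ∈ Icc 0 T, ‖a k j t‖ ≤ m k j)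
    (hm : ∀ k, Summable (m k)) (hS : ∀ k, ∑' j, m k j ≤ S) :
    ∃ α : ι → ℝ → A, (∀ k, α k 0 = b k) ∧ (∃ C, ∀ k, ∀ t ∈ Icc 0 T, ‖α k t‖ ≤ C) ∧
      ∀ k, ∀ t ∈ Icc 0 T,
        HasDerivWithinAt (α k) (-μ k • α k t + ∑' j, a k j t * α j t) (Icc 0 T) t := by
  have h0 : (0 : ℝ) ∈ Icc 0 T := left_mem_Icc.2 hT
  let a' (k j : ι) : C(Icc 0 T, A) :=
    ⟨(Icc 0 T).domRestrict (a k j), continuousOn_iff_continuous_domRestrict.1 (ha k j)⟩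
  have ham' : ∀ k j, ‖a' k j‖ ≤ m k j := fun k j =>
    (ContinuousMap.norm_le _ ((norm_nonneg _).trans (ham k j 0 h0))).2 fun t => ham k j t t.2
  have ha' : ∀ k, Summable fun j => ‖a' k j‖ := fun k =>
    (hm k).of_nonneg_of_le (fun j => norm_nonneg _) (ham' k)
  -- `exp (-(S + 1) t) α` solves a system whose damping exceeds the norm `S` of the coupling.
  obtain ⟨β, hβ₀, ⟨C, hC⟩, hβ⟩ := exists_solution_of_dissipative
    (μ := fun k => μ k + (S + 1)) hT hS₀ (lt_add_one S)
    (fun k => le_add_of_nonneg_left (hμ k)) hb ha'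
    fun k => ((ha' k).tsum_le_tsum (ham' k) (hm k)).trans (hS k)
  refine ⟨fun k t => Real.exp ((S + 1) * t) • β k t, fun k => by simp [hβ₀],
    ⟨Real.exp ((S + 1) * T) * C, fun k t ht => ?_⟩, fun k t ht => ?_⟩
  · rw [norm_smul, Real.norm_eq_abs, Real.abs_exp]
    gcongr
    · exact ht.2
    · exact hC k t ht
  · refine ((hasDerivAt_exp_mul (S + 1) t).smul (hβ k ⟨t, ht⟩)).hasDerivWithinAt.congr_deriv ?_
    simp only [mul_smul_comm, tsum_const_smul'']
    simp only [a', ContinuousMap.coe_mk, domRestrict_apply]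
    module

end LinearSystem

section FourierSeries

/-- The weight `1 + |k|` against which the decay of Fourier coefficients is measured. -/
def freqWeight (k : ℤ) : ℝ := 1 + |(k : ℝ)|

theorem one_le_freqWeight (k : ℤ) : 1 ≤ freqWeight k :=
  le_add_of_nonneg_right (abs_nonneg _)

theorem freqWeight_pos (k : ℤ) : 0 < freqWeight k :=
  one_pos.trans_le (one_le_freqWeight k)

theorem norm_ofReal_freqWeight_pow (n : ℕ) (k : ℤ) :
    ‖(freqWeight k : ℂ) ^ n‖ = freqWeight k ^ n := by
  rw [norm_pow, Complex.norm_real, Real.norm_of_nonneg (freqWeight_pos k).le]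

theorem ofReal_freqWeight_ne_zero (k : ℤ) : (freqWeight k : ℂ) ≠ 0 :=
  Complex.ofReal_ne_zero.2 (freqWeight_pos k).ne'

theorem freqWeight_le_mul (k j : ℤ) : freqWeight k ≤ freqWeight (k - j) * freqWeight j := by
  have htriangle : |(k : ℝ)| ≤ |((k - j : ℤ) : ℝ)| + |(j : ℝ)| := by
    simpa using abs_add_le ((k : ℝ) - j) j
  unfold freqWeight
  nlinarith [mul_nonneg (abs_nonneg ((k - j : ℤ) : ℝ)) (abs_nonneg (j : ℝ))]

theorem freqWeight_le_two_pi_mul {k : ℤ} (hk : k ≠ 0) : freqWeight k ≤ 2 * Real.pi * |(k : ℝ)| := by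
  have hone : (1 : ℝ) ≤ |(k : ℝ)| := by exact_mod_cast Int.one_le_abs hk
  unfold freqWeight
  nlinarith [Real.pi_gt_three]

theorem summable_inv_freqWeight_sq : Summable fun k => (freqWeight k ^ 2)⁻¹ := by
  refine (Real.summable_one_div_int_pow.2 one_lt_two).of_norm_bounded_eventually ?_
  filter_upwards [(finite_singleton (0 : ℤ)).compl_mem_cofinite] with k hk
  have hk' : (0 : ℝ) < |(k : ℝ)| := abs_pos.2 (Int.cast_ne_zero.2 hk)
  rw [norm_inv, norm_pow, Real.norm_of_nonneg (freqWeight_pos k).le, one_div, ← sq_abs (k : ℝ)]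
  gcongr
  exact le_add_of_nonneg_left zero_le_one

theorem norm_le_of_freqWeight_sq {z : ℂ} {k : ℤ} {A : ℝ} (hz : freqWeight k ^ 2 * ‖z‖ ≤ A) :
    ‖z‖ ≤ A * (freqWeight k ^ 2)⁻¹ := by
  rwa [← div_eq_mul_inv, le_div_iff₀' (pow_pos (freqWeight_pos k) 2)]

theorem freqWeight_pow_mono {z : ℂ} {k : ℤ} {A : ℝ} {m n : ℕ} (hmn : m ≤ n)
    (hz : freqWeight k ^ n * ‖z‖ ≤ A) : freqWeight k ^ m * ‖z‖ ≤ A :=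
  (mul_le_mul_of_nonneg_right (pow_le_pow_right₀ (one_le_freqWeight k) hmn)
    (norm_nonneg z)).trans hz

theorem summable_norm_of_freqWeight_sq {c : ℤ → ℂ} {A : ℝ}
    (hc : ∀ k, freqWeight k ^ 2 * ‖c k‖ ≤ A) : Summable fun k => ‖c k‖ :=
  (summable_inv_freqWeight_sq.mul_left A).of_nonneg_of_le (fun _ => norm_nonneg _)
    fun k => norm_le_of_freqWeight_sq (hc k)

/-- The sum at `x` of the 1-periodic Fourier series with coefficients `c`. -/
noncomputable def fourierSum (c : ℤ → ℂ) (x : ℝ) : ℂ :=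
  ∑' k, c k * fourier k (x : UnitAddCircle)

/-- Termwise differentiation of a 1-periodic Fourier series, as an operation on coefficients. -/
noncomputable def fourierDiff (c : ℤ → ℂ) (k : ℤ) : ℂ := 2 * Real.pi * Complex.I * k * c k

theorem norm_fourier_coe (k : ℤ) (x : ℝ) : ‖fourier k (x : UnitAddCircle)‖ = 1 :=
  Circle.norm_coe _

theorem norm_mul_fourier (z : ℂ) (k : ℤ) (x : ℝ) :
    ‖z * fourier k (x : UnitAddCircle)‖ = ‖z‖ := by
  rw [norm_mul, norm_fourier_coe, mul_one]

theorem continuous_fourier_coe (k : ℤ) : Continuous fun x : ℝ => fourier k (x : UnitAddCircle) :=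
  (fourier k).continuous.comp (AddCircle.continuous_mk' 1)

theorem norm_fourierDiff (c : ℤ → ℂ) (k : ℤ) :
    ‖fourierDiff c k‖ = 2 * Real.pi * |(k : ℝ)| * ‖c k‖ := by
  simp only [fourierDiff, norm_mul, RCLike.norm_ofNat, Complex.norm_real, Complex.norm_I,
    Complex.norm_intCast, mul_one, Real.norm_of_nonneg Real.pi_pos.le]

theorem freqWeight_pow_mul_norm_fourierDiff_le {c : ℤ → ℂ} {A : ℝ} {n : ℕ}
    (hc : ∀ k, freqWeight k ^ (n + 1) * ‖c k‖ ≤ A) (k : ℤ) :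
    freqWeight k ^ n * ‖fourierDiff c k‖ ≤ 2 * Real.pi * A := calc
  freqWeight k ^ n * ‖fourierDiff c k‖
      = 2 * Real.pi * (freqWeight k ^ n * |(k : ℝ)| * ‖c k‖) := by
    rw [norm_fourierDiff]
    ring
  _ ≤ 2 * Real.pi * (freqWeight k ^ (n + 1) * ‖c k‖) := by
    rw [pow_succ]
    have := freqWeight_pos k
    gcongr
    exact le_add_of_nonneg_left zero_le_one
  _ ≤ 2 * Real.pi * A := by
    gcongr
    exact hc k

theorem periodic_fourierSum (c : ℤ → ℂ) : Function.Periodic (fourierSum c) 1 := fun x => by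
  simp only [fourierSum, AddCircle.coe_add_period]

theorem hasDerivAt_fourierSum {c : ℤ → ℂ} {A : ℝ} (hc : ∀ k, freqWeight k ^ 3 * ‖c k‖ ≤ A)
    (x : ℝ) : HasDerivAt (fourierSum c) (fourierSum (fourierDiff c) x) x := by
  have hterm : ∀ k (y : ℝ), HasDerivAt (fun y : ℝ => c k * fourier k (y : UnitAddCircle))
      (fourierDiff c k * fourier k (y : UnitAddCircle)) y := fun k y => by
    refine ((hasDerivAt_fourier 1 k y).const_mul (c k)).congr_deriv ?_
    rw [fourierDiff, Complex.ofReal_one, div_one]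
    ring
  refine hasDerivAt_tsum (summable_inv_freqWeight_sq.mul_left (2 * Real.pi * A)) hterm
    (fun k y => ?_) (y₀ := 0) (Summable.of_norm ?_) x
  · rw [norm_mul_fourier]
    exact norm_le_of_freqWeight_sq (freqWeight_pow_mul_norm_fourierDiff_le hc k)
  · simp only [norm_mul_fourier]
    exact summable_norm_of_freqWeight_sq fun k => freqWeight_pow_mono (by norm_num) (hc k)

theorem continuousOn_fourierSum {c : ℤ → ℝ → ℂ} {A : ℝ} {s : Set ℝ}
    (hcont : ∀ k, ContinuousOn (c k) s) (hc : ∀ t ∈ s, ∀ k, freqWeight k ^ 2 * ‖c k t‖ ≤ A) :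
    ContinuousOn (fun p : ℝ × ℝ => fourierSum (fun k => c k p.1) p.2) (s ×ˢ univ) := by
  refine continuousOn_tsum (fun k => ?_) (summable_inv_freqWeight_sq.mul_left A) fun k p hp => ?_
  · exact ((hcont k).comp continuousOn_fst fun p hp => hp.1).mul
      ((continuous_fourier_coe k).comp continuous_snd).continuousOn
  · rw [norm_mul_fourier]
    exact norm_le_of_freqWeight_sq (hc p.1 hp.1 k)

theorem hasDerivWithinAt_fourierSum {c c' : ℤ → ℝ → ℂ} {a b A A' t : ℝ}
    (hcont : ∀ k, ContinuousOn (c' k) (Icc a b))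
    (hderiv : ∀ k, ∀ s ∈ Icc a b, HasDerivWithinAt (c k) (c' k s) (Icc a b) s)
    (hc : ∀ s ∈ Icc a b, ∀ k, freqWeight k ^ 2 * ‖c k s‖ ≤ A)
    (hc' : ∀ s ∈ Icc a b, ∀ k, freqWeight k ^ 2 * ‖c' k s‖ ≤ A') (ht : t ∈ Icc a b) (x : ℝ) :
    HasDerivWithinAt (fun s => fourierSum (fun k => c k s) x) (fourierSum (fun k => c' k t) x)
      (Icc a b) t := by
  refine hasDerivWithinAt_Icc_tsum (f' := fun k s => c' k s * fourier k (x : UnitAddCircle))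
    (summable_inv_freqWeight_sq.mul_left A') (fun k => (hcont k).mul continuousOn_const)
    (fun k s hs => (hderiv k s hs).mul_const _) (fun k s hs => ?_) (Summable.of_norm ?_) ht
  · rw [norm_mul_fourier]
    exact norm_le_of_freqWeight_sq (hc' s hs k)
  · simp only [norm_mul_fourier]
    exact summable_norm_of_freqWeight_sq (hc a (left_mem_Icc.2 (ht.1.trans ht.2)))

theorem periodicC12_fourierSum {c c' : ℤ → ℝ → ℂ} {A A' T : ℝ}
    (hcont : ∀ k, ContinuousOn (c' k) (Icc 0 T))
    (hderiv : ∀ k, ∀ t ∈ Icc 0 T, HasDerivWithinAt (c k) (c' k t) (Icc 0 T) t)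
    (hc : ∀ t ∈ Icc 0 T, ∀ k, freqWeight k ^ 4 * ‖c k t‖ ≤ A)
    (hc' : ∀ t ∈ Icc 0 T, ∀ k, freqWeight k ^ 2 * ‖c' k t‖ ≤ A') :
    PeriodicC12 T (fun t => fourierSum fun k => c k t) (fun t => fourierSum fun k => c' k t)
      (fun t => fourierSum (fourierDiff fun k => c k t))
      (fun t => fourierSum (fourierDiff (fourierDiff fun k => c k t))) := by
  have hdiff : ∀ t ∈ Icc 0 T, ∀ k,
      freqWeight k ^ 3 * ‖fourierDiff (fun k => c k t) k‖ ≤ 2 * Real.pi * A := fun t ht =>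
    freqWeight_pow_mul_norm_fourierDiff_le (hc t ht)
  have hcont_c : ∀ k, ContinuousOn (c k) (Icc 0 T) := fun k t ht =>
    (hderiv k t ht).continuousWithinAt
  have hcont_diff : ∀ k, ContinuousOn (fun t => fourierDiff (fun k => c k t) k) (Icc 0 T) :=
    fun k => continuousOn_const.mul (hcont_c k)
  have hc₂ : ∀ t ∈ Icc 0 T, ∀ k, freqWeight k ^ 2 * ‖c k t‖ ≤ A := fun t ht k =>
    freqWeight_pow_mono (by norm_num) (hc t ht k)
  exact
    { periodic := fun t _ => periodic_fourierSum _
      continuousOn := continuousOn_fourierSum hcont_c hc₂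
      continuousOn_time := continuousOn_fourierSum hcont hc'
      continuousOn_space := continuousOn_fourierSum hcont_diff fun t ht k =>
        freqWeight_pow_mono (by norm_num) (hdiff t ht k)
      continuousOn_space₂ := continuousOn_fourierSum
        (fun k => continuousOn_const.mul (hcont_diff k)) fun t ht =>
          freqWeight_pow_mul_norm_fourierDiff_le (hdiff t ht)
      hasDerivWithinAt_time := fun t ht x =>
        hasDerivWithinAt_fourierSum hcont hderiv hc₂ hc' ht x
      hasDerivAt_space := fun t ht x => hasDerivAt_fourierSum
        (fun k => freqWeight_pow_mono (by norm_num) (hc t ht k)) x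
      hasDerivAt_space₂ := fun t ht x => hasDerivAt_fourierSum (hdiff t ht) x }

end FourierSeries

section Convolution

/-- Convolution of coefficient families, the Fourier side of pointwise multiplication. -/
noncomputable def coeffConv (a c : ℤ → ℂ) (k : ℤ) : ℂ := ∑' j, a (k - j) * c j

theorem fourierSum_coeffConv {a c : ℤ → ℂ} (ha : Summable fun k => ‖a k‖)
    (hc : Summable fun k => ‖c k‖) (x : ℝ) :
    fourierSum (coeffConv a c) x = fourierSum a x * fourierSum c x := by
  let shear : ℤ × ℤ ≃ ℤ × ℤ :=
    { toFun := fun p => (p.1 - p.2, p.2)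
      invFun := fun p => (p.1 + p.2, p.2)
      left_inv := fun p => by simp
      right_inv := fun p => by simp }
  have ha' : Summable fun k => ‖a k * fourier k (x : UnitAddCircle)‖ := by
    simpa only [norm_mul_fourier] using ha
  have hc' : Summable fun k => ‖c k * fourier k (x : UnitAddCircle)‖ := by
    simpa only [norm_mul_fourier] using hc
  have hshear := shear.summable_iff.2 (summable_mul_of_summable_norm ha' hc')
  unfold fourierSum coeffConv
  rw [tsum_mul_tsum_of_summable_norm ha' hc', ← shear.tsum_eq]
  refine Eq.trans (tsum_congr fun k => ?_) hshear.tsum_prod.symm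
  rw [← tsum_mul_right]
  refine tsum_congr fun j => ?_
  have hfourier : fourier k (x : UnitAddCircle)
      = fourier (k - j) (x : UnitAddCircle) * fourier j (x : UnitAddCircle) := by
    rw [← fourier_add, sub_add_cancel]
  simp only [Function.comp_apply, shear, Equiv.coe_fn_mk, hfourier]
  ring

/-- The kernel of `coeffConv a` after conjugation by the weight `freqWeight ^ n`, so that decay
of order `n` becomes boundedness. -/
noncomputable def weightedKernel (n : ℕ) (a : ℤ → ℂ) (k j : ℤ) : ℂ :=
  ((freqWeight k / freqWeight j) ^ n : ℝ) * a (k - j)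

theorem norm_weightedKernel_le {n : ℕ} {a : ℤ → ℂ} {B : ℝ}
    (ha : ∀ k, freqWeight k ^ (n + 2) * ‖a k‖ ≤ B) (k j : ℤ) :
    ‖weightedKernel n a k j‖ ≤ B * (freqWeight (k - j) ^ 2)⁻¹ := by
  have hk := freqWeight_pos k
  have hj := freqWeight_pos j
  have hratio : freqWeight k / freqWeight j ≤ freqWeight (k - j) :=
    (div_le_iff₀ hj).2 (freqWeight_le_mul k j)
  rw [← div_eq_mul_inv, le_div_iff₀' (pow_pos (freqWeight_pos _) 2)]
  calc freqWeight (k - j) ^ 2 * ‖weightedKernel n a k j‖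
      = (freqWeight k / freqWeight j) ^ n * (freqWeight (k - j) ^ 2 * ‖a (k - j)‖) := by
        rw [weightedKernel, norm_mul, Complex.norm_real, Real.norm_of_nonneg (by positivity)]
        ring
    _ ≤ freqWeight (k - j) ^ n * (freqWeight (k - j) ^ 2 * ‖a (k - j)‖) := by gcongr
    _ = freqWeight (k - j) ^ (n + 2) * ‖a (k - j)‖ := by ring
    _ ≤ B := ha (k - j)

theorem summable_weightedKernel_bound (B : ℝ) (k : ℤ) :
    Summable fun j => B * (freqWeight (k - j) ^ 2)⁻¹ :=
  ((Equiv.subLeft k).summable_iff.2 summable_inv_freqWeight_sq).mul_left B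

theorem tsum_weightedKernel_bound (B : ℝ) (k : ℤ) :
    ∑' j, B * (freqWeight (k - j) ^ 2)⁻¹ = B * ∑' j, (freqWeight j ^ 2)⁻¹ := by
  rw [tsum_mul_left]
  exact congrArg _ ((Equiv.subLeft k).tsum_eq fun j => (freqWeight j ^ 2)⁻¹)

theorem weightedKernel_mul (n : ℕ) (a : ℤ → ℂ) (z : ℂ) (k j : ℤ) :
    weightedKernel n a k j * z
      = (freqWeight k : ℂ) ^ n * (a (k - j) * (((freqWeight j : ℂ) ^ n)⁻¹ * z)) := by
  rw [weightedKernel, Complex.ofReal_pow, Complex.ofReal_div, div_pow]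
  ring

theorem tsum_weightedKernel_mul (n : ℕ) (a α : ℤ → ℂ) (k : ℤ) :
    ∑' j, weightedKernel n a k j * α j
      = (freqWeight k : ℂ) ^ n * coeffConv a (fun j => ((freqWeight j : ℂ) ^ n)⁻¹ * α j) k := by
  simp only [weightedKernel_mul, tsum_mul_left, coeffConv]

theorem freqWeight_pow_mul_norm_coeffConv_le {n : ℕ} {a c : ℤ → ℂ} {B A : ℝ}
    (ha : ∀ k, freqWeight k ^ (n + 2) * ‖a k‖ ≤ B) (hc : ∀ k, freqWeight k ^ n * ‖c k‖ ≤ A)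
    (k : ℤ) :
    freqWeight k ^ n * ‖coeffConv a c k‖ ≤ (B * ∑' j, (freqWeight j ^ 2)⁻¹) * A := by
  let α : ℤ → ℂ := fun j => (freqWeight j : ℂ) ^ n * c j
  have hα : ∀ j, ‖α j‖ ≤ A := fun j => by
    rw [norm_mul, norm_ofReal_freqWeight_pow]
    exact hc j
  have hcα : (fun j => ((freqWeight j : ℂ) ^ n)⁻¹ * α j) = c := funext fun j =>
    inv_mul_cancel_left₀ (pow_ne_zero n (ofReal_freqWeight_ne_zero j)) (c j)
  have hsummable : Summable fun j => ‖weightedKernel n a k j‖ :=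
    (summable_weightedKernel_bound B k).of_nonneg_of_le (fun _ => norm_nonneg _)
      (norm_weightedKernel_le ha k)
  calc freqWeight k ^ n * ‖coeffConv a c k‖ = ‖∑' j, weightedKernel n a k j * α j‖ := by
        rw [tsum_weightedKernel_mul, hcα, norm_mul, norm_ofReal_freqWeight_pow]
    _ ≤ (B * ∑' j, (freqWeight j ^ 2)⁻¹) * A := by
        refine norm_tsum_mul_le hsummable ?_ ((norm_nonneg _).trans (hα 0)) hα
        rw [← tsum_weightedKernel_bound B k]
        exact hsummable.tsum_le_tsum (norm_weightedKernel_le ha k)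
          (summable_weightedKernel_bound B k)

end Convolution

section FourierCoefficients

/-- The `k`-th Fourier coefficient, on the unit circle, of a real-valued function. -/
noncomputable def realFourierCoeff (f : ℝ → ℝ) (k : ℤ) : ℂ :=
  fourierCoeffOn one_pos (fun x => (f x : ℂ)) k

theorem realFourierCoeff_eq_integral (f : ℝ → ℝ) (k : ℤ) :
    realFourierCoeff f k = ∫ x in (0 : ℝ)..1, fourier (-k) (x : UnitAddCircle) * (f x : ℂ) := by
  simp [realFourierCoeff, fourierCoeffOn_eq_integral]

theorem norm_realFourierCoeff_le {f : ℝ → ℝ} {B : ℝ} (hf : ∀ x, |f x| ≤ B) (k : ℤ) :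
    ‖realFourierCoeff f k‖ ≤ B := by
  have hbound : ∀ x : ℝ, ‖fourier (-k) (x : UnitAddCircle) * (f x : ℂ)‖ ≤ B := fun x => by
    rw [norm_mul, norm_fourier_coe, one_mul, Complex.norm_real]
    exact hf x
  rw [realFourierCoeff_eq_integral]
  simpa only [sub_zero, abs_one, mul_one] using
    intervalIntegral.norm_integral_le_of_norm_le_const (a := 0) (b := 1) fun x _ => hbound x

theorem realFourierCoeff_of_hasDerivAt {f f' : ℝ → ℝ} (hf : ∀ x, HasDerivAt f (f' x) x)
    (hf' : Continuous f') (hper : Function.Periodic f 1) :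
    realFourierCoeff f' = fourierDiff (realFourierCoeff f) := by
  have hends : f 1 = f 0 := by simpa only [zero_add] using hper 0
  funext k
  obtain rfl | hk := eq_or_ne k 0
  · have hmean : ∫ x in (0 : ℝ)..1, f' x = 0 := by
      rw [intervalIntegral.integral_eq_sub_of_hasDerivAt (fun x _ => hf x)
        (hf'.intervalIntegrable 0 1), hends, sub_self]
    simp [realFourierCoeff_eq_integral, fourierDiff, intervalIntegral.integral_ofReal, hmean]
  · have hparts := fourierCoeffOn_of_hasDerivAt (n := k) one_pos hk
      (fun x _ => (hf x).ofReal_comp) (Continuous.intervalIntegrable (by fun_prop) 0 1)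
    have hk' : (k : ℂ) ≠ 0 := Int.cast_ne_zero.2 hk
    have hpi : (Real.pi : ℂ) ≠ 0 := Complex.ofReal_ne_zero.2 Real.pi_ne_zero
    rw [fourierDiff, realFourierCoeff, realFourierCoeff, hparts, hends,
      sub_self, mul_zero, zero_sub, Complex.ofReal_one, Complex.ofReal_zero, sub_zero, one_mul]
    field_simp

theorem periodic_iteratedDeriv {f : ℝ → ℝ} {c : ℝ} (hper : Function.Periodic f c) (n : ℕ) :
    Function.Periodic (iteratedDeriv n f) c := fun x => by
  rw [← congrFun (iteratedDeriv_comp_add_const n f c) x, funext hper]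

theorem realFourierCoeff_iteratedDeriv {f : ℝ → ℝ} {n : ℕ} (hf : ContDiff ℝ n f)
    (hper : Function.Periodic f 1) :
    realFourierCoeff (iteratedDeriv n f) = fourierDiff^[n] (realFourierCoeff f) := by
  induction n with
  | zero => simp only [iteratedDeriv_zero, Function.iterate_zero, id]
  | succ n ih =>
    have hderiv : ∀ x, HasDerivAt (iteratedDeriv n f) (iteratedDeriv (n + 1) f x) x := fun x => by
      rw [iteratedDeriv_succ]
      exact (hf.differentiable_iteratedDeriv' n x).hasDerivAt
    rw [realFourierCoeff_of_hasDerivAt hderiv (hf.continuous_iteratedDeriv' (n + 1))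
      (periodic_iteratedDeriv hper n), ih (hf.of_le (by exact_mod_cast n.le_succ)),
      Function.iterate_succ_apply']

theorem norm_fourierDiff_iterate (n : ℕ) (c : ℤ → ℂ) (k : ℤ) :
    ‖fourierDiff^[n] c k‖ = (2 * Real.pi * |(k : ℝ)|) ^ n * ‖c k‖ := by
  induction n with
  | zero => simp only [Function.iterate_zero, id, pow_zero, one_mul]
  | succ n ih =>
    rw [Function.iterate_succ_apply', norm_fourierDiff, ih]
    ring

theorem freqWeight_pow_mul_norm_realFourierCoeff_le {f : ℝ → ℝ} {n : ℕ} {B : ℝ}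
    (hf : ContDiff ℝ n f) (hper : Function.Periodic f 1) (hB : ∀ x, |f x| ≤ B)
    (hB' : ∀ x, |iteratedDeriv n f x| ≤ B) (k : ℤ) :
    freqWeight k ^ n * ‖realFourierCoeff f k‖ ≤ B := by
  obtain rfl | hk := eq_or_ne k 0
  · simpa [freqWeight] using norm_realFourierCoeff_le hB 0
  · have hw := (freqWeight_pos k).le
    calc freqWeight k ^ n * ‖realFourierCoeff f k‖
        ≤ (2 * Real.pi * |(k : ℝ)|) ^ n * ‖realFourierCoeff f k‖ := by
          gcongr
          exact freqWeight_le_two_pi_mul hk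
      _ = ‖realFourierCoeff (iteratedDeriv n f) k‖ := by
          rw [realFourierCoeff_iteratedDeriv hf hper, norm_fourierDiff_iterate]
      _ ≤ B := norm_realFourierCoeff_le hB' k

theorem exists_freqWeight_pow_mul_norm_realFourierCoeff_le {f : ℝ → ℝ} {n : ℕ}
    (hf : ContDiff ℝ n f) (hper : Function.Periodic f 1) :
    ∃ B, ∀ k, freqWeight k ^ n * ‖realFourierCoeff f k‖ ≤ B := by
  have exists_bound : ∀ {g : ℝ → ℝ}, Continuous g → Function.Periodic g 1 →
      ∃ B, ∀ x, |g x| ≤ B := fun hg hgper => by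
    obtain ⟨B, hB⟩ := (hgper.isBounded_of_continuous one_ne_zero hg).exists_norm_le
    exact ⟨B, fun x => hB _ (mem_range_self x)⟩
  obtain ⟨B, hB⟩ := exists_bound hf.continuous hper
  obtain ⟨B', hB'⟩ := exists_bound (hf.continuous_iteratedDeriv' n) (periodic_iteratedDeriv hper n)
  exact ⟨max B B', freqWeight_pow_mul_norm_realFourierCoeff_le hf hper
    (fun x => le_max_of_le_left (hB x)) fun x => le_max_of_le_right (hB' x)⟩

theorem fourierSum_realFourierCoeff {f : ℝ → ℝ} (hf : ContDiff ℝ 2 f)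
    (hper : Function.Periodic f 1) (x : ℝ) : fourierSum (realFourierCoeff f) x = f x := by
  have hcont : Continuous f := hf.continuous
  have hper' : Function.Periodic (fun x => (f x : ℂ)) 1 := fun x => by simp only [hper x]
  let g : C(UnitAddCircle, ℂ) := ⟨hper'.lift, Continuous.quotient_lift (by fun_prop) _⟩
  have hcoeff : fourierCoeff g = realFourierCoeff f := funext fun k => by
    rw [fourierCoeff_eq_intervalIntegral _ _ 0, realFourierCoeff_eq_integral]
    simp only [zero_add, div_one, one_smul, smul_eq_mul]
    rfl
  obtain ⟨B, hB⟩ := exists_freqWeight_pow_mul_norm_realFourierCoeff_le (n := 2) hf hper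
  have hseries := has_pointwise_sum_fourier_series_of_summable
    (hcoeff ▸ (summable_norm_of_freqWeight_sq hB).of_norm) (x : UnitAddCircle)
  rw [hcoeff] at hseries
  exact hseries.tsum_eq

theorem fourierSum_fourierDiff_realFourierCoeff {f : ℝ → ℝ} (hf : ContDiff ℝ 3 f)
    (hper : Function.Periodic f 1) (x : ℝ) :
    fourierSum (fourierDiff (realFourierCoeff f)) x = deriv f x := by
  have hderiv : ∀ x, HasDerivAt f (deriv f x) x := fun x =>
    (hf.differentiable (by norm_num) x).hasDerivAt
  have hf' : ContDiff ℝ 2 (deriv f) :=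
    ContDiff.deriv' (by simpa only [two_add_one_eq_three] using hf)
  rw [← realFourierCoeff_of_hasDerivAt hderiv hf'.continuous hper]
  exact fourierSum_realFourierCoeff hf' (periodic_of_hasDerivAt hper hderiv) x

end FourierCoefficients

section HeatModes

variable {ν T A B : ℝ} {n : ℕ}

/-- The Fourier side of `φ ↦ ν φ_xx + W φ`, where `V` and `c` are the coefficients of `W`
and `φ`. -/
noncomputable def heatRate (ν : ℝ) (V c : ℤ → ℂ) (k : ℤ) : ℂ :=
  ν * fourierDiff (fourierDiff c) k + coeffConv V c k

theorem freqWeight_pow_mul_norm_heatRate_le {V c : ℤ → ℂ}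
    (hV : ∀ k, freqWeight k ^ (n + 2) * ‖V k‖ ≤ B) (hc : ∀ k, freqWeight k ^ (n + 2) * ‖c k‖ ≤ A)
    (k : ℤ) :
    freqWeight k ^ n * ‖heatRate ν V c k‖
      ≤ |ν| * (2 * Real.pi * (2 * Real.pi * A)) + B * (∑' j, (freqWeight j ^ 2)⁻¹) * A := by
  have hw : 0 ≤ freqWeight k ^ n := (pow_pos (freqWeight_pos k) n).le
  calc freqWeight k ^ n * ‖heatRate ν V c k‖
      ≤ freqWeight k ^ n * (|ν| * ‖fourierDiff (fourierDiff c) k‖ + ‖coeffConv V c k‖) := by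
        gcongr
        refine (norm_add_le _ _).trans_eq ?_
        rw [norm_mul, Complex.norm_real, Real.norm_eq_abs]
    _ = |ν| * (freqWeight k ^ n * ‖fourierDiff (fourierDiff c) k‖)
        + freqWeight k ^ n * ‖coeffConv V c k‖ := by ring
    _ ≤ |ν| * (2 * Real.pi * (2 * Real.pi * A)) + B * (∑' j, (freqWeight j ^ 2)⁻¹) * A :=
        add_le_add (mul_le_mul_of_nonneg_left (freqWeight_pow_mul_norm_fourierDiff_le
          (freqWeight_pow_mul_norm_fourierDiff_le hc) k) (abs_nonneg ν))
          (freqWeight_pow_mul_norm_coeffConv_le hV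
            (fun j => freqWeight_pow_mono (n.le_add_right 2) (hc j)) k)

theorem fourierSum_heatRate {V c : ℤ → ℂ} (hV : ∀ k, freqWeight k ^ 4 * ‖V k‖ ≤ B)
    (hc : ∀ k, freqWeight k ^ 4 * ‖c k‖ ≤ A) (x : ℝ) :
    fourierSum (heatRate ν V c) x
      = ν * fourierSum (fourierDiff (fourierDiff c)) x + fourierSum V x * fourierSum c x := by
  have hc₂ : ∀ k, freqWeight k ^ 2 * ‖c k‖ ≤ A := fun k =>
    freqWeight_pow_mono (by norm_num) (hc k)
  have summable_mul_fourier : ∀ {d : ℤ → ℂ} {D : ℝ}, (∀ k, freqWeight k ^ 2 * ‖d k‖ ≤ D) →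
      Summable fun k => d k * fourier k (x : UnitAddCircle) := fun hd =>
    Summable.of_norm (by simpa only [norm_mul_fourier] using summable_norm_of_freqWeight_sq hd)
  have hdiff := summable_mul_fourier
    (freqWeight_pow_mul_norm_fourierDiff_le (freqWeight_pow_mul_norm_fourierDiff_le hc))
  have hconv := summable_mul_fourier (freqWeight_pow_mul_norm_coeffConv_le hV hc₂)
  rw [← fourierSum_coeffConv (summable_norm_of_freqWeight_sq fun k =>
      freqWeight_pow_mono (by norm_num) (hV k)) (summable_norm_of_freqWeight_sq hc₂)]
  unfold fourierSum
  rw [← tsum_mul_left, ← (hdiff.mul_left _).tsum_add hconv]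
  refine tsum_congr fun k => ?_
  rw [heatRate]
  ring

theorem fourierSum_fourierDiff_heatRate {V c : ℤ → ℂ} (hV : ∀ k, freqWeight k ^ 5 * ‖V k‖ ≤ B)
    (hc : ∀ k, freqWeight k ^ 5 * ‖c k‖ ≤ A) (x : ℝ) :
    fourierSum (fourierDiff (heatRate ν V c)) x
      = ν * fourierSum (fourierDiff (fourierDiff (fourierDiff c))) x
        + (fourierSum (fourierDiff V) x * fourierSum c x
          + fourierSum V x * fourierSum (fourierDiff c) x) := by
  have mono : ∀ {m : ℕ} {d : ℤ → ℂ} {D : ℝ}, m ≤ 5 → (∀ k, freqWeight k ^ 5 * ‖d k‖ ≤ D) →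
      ∀ k, freqWeight k ^ m * ‖d k‖ ≤ D := fun hm hd k => freqWeight_pow_mono hm (hd k)
  have hrate : fourierSum (heatRate ν V c) = fun x =>
      ν * fourierSum (fourierDiff (fourierDiff c)) x + fourierSum V x * fourierSum c x :=
    funext (fourierSum_heatRate (mono (by norm_num) hV) (mono (by norm_num) hc))
  have hleft := hasDerivAt_fourierSum
    (freqWeight_pow_mul_norm_heatRate_le (ν := ν) (n := 3) hV hc) x
  have hright := ((hasDerivAt_fourierSum (freqWeight_pow_mul_norm_fourierDiff_le
      (freqWeight_pow_mul_norm_fourierDiff_le hc)) x).const_mul (ν : ℂ)).add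
    ((hasDerivAt_fourierSum (mono (by norm_num) hV) x).mul
      (hasDerivAt_fourierSum (mono (by norm_num) hc) x))
  rw [hrate] at hleft
  exact hleft.unique hright

theorem continuousOn_heatRate {V c : ℤ → ℝ → ℂ} {s : Set ℝ} (hV : ∀ k, ContinuousOn (V k) s)
    (hc : ∀ k, ContinuousOn (c k) s) (hVB : ∀ t ∈ s, ∀ k, freqWeight k ^ 2 * ‖V k t‖ ≤ B)
    (hcA : ∀ t ∈ s, ∀ k, ‖c k t‖ ≤ A) (k : ℤ) :
    ContinuousOn (fun t => heatRate ν (fun j => V j t) (fun j => c j t) k) s := by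
  refine ContinuousOn.add (continuousOn_const.mul
    (continuousOn_const.mul (continuousOn_const.mul (hc k)))) ?_
  refine continuousOn_tsum (fun j => (hV (k - j)).mul (hc j))
    ((summable_weightedKernel_bound B k).mul_right A) fun j t ht => ?_
  have hbound := norm_le_of_freqWeight_sq (hVB t ht (k - j))
  rw [norm_mul]
  exact mul_le_mul hbound (hcA t ht j) (norm_nonneg _) ((norm_nonneg _).trans hbound)

theorem inv_mul_heatRate (ν : ℝ) (V α : ℤ → ℂ) (k : ℤ) :
    ((freqWeight k : ℂ) ^ n)⁻¹
        * (-(ν * (2 * Real.pi * k) ^ 2) • α k + ∑' j, weightedKernel n V k j * α j)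
      = heatRate ν V (fun j => ((freqWeight j : ℂ) ^ n)⁻¹ * α j) k := by
  have hw : (freqWeight k : ℂ) ^ n ≠ 0 := pow_ne_zero n (ofReal_freqWeight_ne_zero k)
  rw [tsum_weightedKernel_mul, mul_add, inv_mul_cancel_left₀ hw, heatRate, Complex.real_smul]
  simp only [fourierDiff]
  push_cast
  linear_combination
    (-4 * ν * Real.pi ^ 2 * k ^ 2 * ((freqWeight k : ℂ) ^ n)⁻¹ * α k) * Complex.I_sq

theorem exists_heat_modes {V : ℤ → ℝ → ℂ} {b : ℤ → ℂ} {B₀ : ℝ} (hν : 0 ≤ ν) (hT : 0 ≤ T)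
    (hV : ∀ k, ContinuousOn (V k) (Icc 0 T))
    (hVB : ∀ t ∈ Icc 0 T, ∀ k, freqWeight k ^ (n + 2) * ‖V k t‖ ≤ B)
    (hb : ∀ k, freqWeight k ^ n * ‖b k‖ ≤ B₀) :
    ∃ c : ℤ → ℝ → ℂ, (∀ k, c k 0 = b k) ∧
      (∃ A, ∀ t ∈ Icc 0 T, ∀ k, freqWeight k ^ n * ‖c k t‖ ≤ A) ∧
      ∀ k, ∀ t ∈ Icc 0 T, HasDerivWithinAt (c k)
        (heatRate ν (fun j => V j t) (fun j => c j t) k) (Icc 0 T) t := by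
  have hB : 0 ≤ B := (mul_nonneg (pow_pos (freqWeight_pos 0) _).le (norm_nonneg _)).trans
    (hVB 0 (left_mem_Icc.2 hT) 0)
  obtain ⟨α, hα₀, ⟨A, hαA⟩, hα⟩ := exists_solution_infinite_linear_system
    (b := fun k => (freqWeight k : ℂ) ^ n * b k) (μ := fun k : ℤ => ν * (2 * Real.pi * k) ^ 2)
    (a := fun k j t => weightedKernel n (fun i => V i t) k j) hT
    (mul_nonneg hB (tsum_nonneg fun j => (inv_pos.2 (pow_pos (freqWeight_pos j) 2)).le))
    (fun k => by positivity) (fun k => by rw [norm_mul, norm_ofReal_freqWeight_pow]; exact hb k)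
    (fun k j => continuousOn_const.mul (hV (k - j)))
    (fun k j t ht => norm_weightedKernel_le (hVB t ht) k j) (summable_weightedKernel_bound B)
    (fun k => (tsum_weightedKernel_bound B k).le)
  have hw : ∀ k, (freqWeight k : ℂ) ^ n ≠ 0 := fun k => pow_ne_zero n (ofReal_freqWeight_ne_zero k)
  refine ⟨fun k t => ((freqWeight k : ℂ) ^ n)⁻¹ * α k t, fun k => ?_, ⟨A, fun t ht k => ?_⟩,
    fun k t ht => ?_⟩
  · simp only [hα₀, inv_mul_cancel_left₀ (hw k)]
  · rw [← norm_ofReal_freqWeight_pow, ← norm_mul, mul_inv_cancel_left₀ (hw k)]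
    exact hαA k t ht
  · rw [← inv_mul_heatRate]
    exact (hα k t ht).const_mul _

end HeatModes

/-- A time-dependent function that is smooth and 1-periodic in space, all of whose space
derivatives depend continuously on time and space jointly. -/
structure IsSmoothPeriodicInSpace (W : ℝ → ℝ → ℝ) : Prop where
  periodic : ∀ t, Function.Periodic (W t) 1
  contDiff : ∀ t (n : ℕ), ContDiff ℝ n (W t)
  continuous_iteratedDeriv : ∀ n, Continuous fun p : ℝ × ℝ => iteratedDeriv n (W p.1) p.2

namespace IsSmoothPeriodicInSpace

variable {W : ℝ → ℝ → ℝ}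

theorem exists_abs_iteratedDeriv_le (hW : IsSmoothPeriodicInSpace W) (T : ℝ) (n : ℕ) :
    ∃ B, ∀ t ∈ Icc 0 T, ∀ x, |iteratedDeriv n (W t) x| ≤ B :=
  exists_norm_le_of_periodic_of_continuousOn (fun t _ => periodic_iteratedDeriv (hW.periodic t) n)
    (hW.continuous_iteratedDeriv n).continuousOn

theorem exists_abs_le (hW : IsSmoothPeriodicInSpace W) (T : ℝ) :
    ∃ B, ∀ t ∈ Icc 0 T, ∀ x, |W t x| ≤ B := by
  simpa only [iteratedDeriv_zero] using hW.exists_abs_iteratedDeriv_le T 0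

theorem exists_freqWeight_pow_mul_norm_le (hW : IsSmoothPeriodicInSpace W) (T : ℝ) (n : ℕ) :
    ∃ B, ∀ t ∈ Icc 0 T, ∀ k, freqWeight k ^ n * ‖realFourierCoeff (W t) k‖ ≤ B := by
  obtain ⟨B, hB⟩ := hW.exists_abs_le T
  obtain ⟨B', hB'⟩ := hW.exists_abs_iteratedDeriv_le T n
  exact ⟨max B B', fun t ht => freqWeight_pow_mul_norm_realFourierCoeff_le (hW.contDiff t n)
    (hW.periodic t) (fun x => le_max_of_le_left (hB t ht x))
    fun x => le_max_of_le_right (hB' t ht x)⟩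

theorem continuous_uncurry (hW : IsSmoothPeriodicInSpace W) :
    Continuous fun p : ℝ × ℝ => W p.1 p.2 := by
  simpa only [iteratedDeriv_zero] using hW.continuous_iteratedDeriv 0

theorem continuous_realFourierCoeff (hW : IsSmoothPeriodicInSpace W) (k : ℤ) :
    Continuous fun t => realFourierCoeff (W t) k := by
  simp only [realFourierCoeff_eq_integral]
  refine intervalIntegral.continuous_parametric_intervalIntegral_of_continuous'
    (f := fun t x => fourier (-k) (x : UnitAddCircle) * (W t x : ℂ)) ?_ 0 1
  exact ((continuous_fourier_coe (-k)).comp continuous_snd).mul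
    (Complex.continuous_ofReal.comp hW.continuous_uncurry)

end IsSmoothPeriodicInSpace

section HeatEquation

variable {ν T : ℝ}

theorem periodicC12_fourierSum_of_heatRate {V c : ℤ → ℝ → ℂ} {A B : ℝ}
    (hV : ∀ k, ContinuousOn (V k) (Icc 0 T))
    (hVB : ∀ t ∈ Icc 0 T, ∀ k, freqWeight k ^ 5 * ‖V k t‖ ≤ B)
    (hcA : ∀ t ∈ Icc 0 T, ∀ k, freqWeight k ^ 5 * ‖c k t‖ ≤ A)
    (hc : ∀ k, ∀ t ∈ Icc 0 T, HasDerivWithinAt (c k)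
      (heatRate ν (fun j => V j t) (fun j => c j t) k) (Icc 0 T) t) :
    PeriodicC12 T (fun t => fourierSum fun k => c k t)
      (fun t x => fourierSum (heatRate ν (fun j => V j t) fun j => c j t) x)
      (fun t => fourierSum (fourierDiff fun k => c k t))
      (fun t => fourierSum (fourierDiff (fourierDiff fun k => c k t))) ∧
    PeriodicC12 T (fun t => fourierSum (fourierDiff fun k => c k t))
      (fun t x => fourierSum (fourierDiff (heatRate ν (fun j => V j t) fun j => c j t)) x)
      (fun t => fourierSum (fourierDiff (fourierDiff fun k => c k t)))
      (fun t => fourierSum (fourierDiff (fourierDiff (fourierDiff fun k => c k t)))) := by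
  have hrate₃ := fun t ht => freqWeight_pow_mul_norm_heatRate_le (ν := ν) (n := 3)
    (hVB t ht) (hcA t ht)
  have hrate_cont : ∀ k, ContinuousOn
      (fun t => heatRate ν (fun j => V j t) (fun j => c j t) k) (Icc 0 T) :=
    continuousOn_heatRate hV (fun k t ht => (hc k t ht).continuousWithinAt)
      (fun t ht k => freqWeight_pow_mono (by norm_num) (hVB t ht k))
      fun t ht k => by simpa using freqWeight_pow_mono (Nat.zero_le 5) (hcA t ht k)
  refine ⟨periodicC12_fourierSum hrate_cont hc
    (fun t ht k => freqWeight_pow_mono (by norm_num) (hcA t ht k))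
    (fun t ht k => freqWeight_pow_mono (by norm_num) (hrate₃ t ht k)), ?_⟩
  exact periodicC12_fourierSum (c := fun k t => fourierDiff (fun j => c j t) k)
    (fun k => continuousOn_const.mul (hrate_cont k)) (fun k t ht => (hc k t ht).const_mul _)
    (fun t ht => freqWeight_pow_mul_norm_fourierDiff_le (hcA t ht))
    (fun t ht => freqWeight_pow_mul_norm_fourierDiff_le (hrate₃ t ht))

theorem exists_heat_equation_solution {W : ℝ → ℝ → ℝ} {φ₀ : ℝ → ℝ} (hν : 0 ≤ ν) (hT : 0 ≤ T)
    (hW : IsSmoothPeriodicInSpace W) (hφ₀ : ContDiff ℝ 5 φ₀) (hper : Function.Periodic φ₀ 1) :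
    ∃ φ φx φxx φxxx : ℝ → ℝ → ℝ,
      PeriodicC12 T φ (fun t x => ν * φxx t x + W t x * φ t x) φx φxx ∧
      PeriodicC12 T φx
        (fun t x => ν * φxxx t x + (deriv (W t) x * φ t x + W t x * φx t x)) φxx φxxx ∧
      φ 0 = φ₀ := by
  -- Four orders of decay make a Fourier series `C^{1,2}`; `φx` needs one more than `φ`, and the
  -- convolution with the coefficients of `W` costs another two.
  obtain ⟨B, hB⟩ := hW.exists_freqWeight_pow_mul_norm_le T 7
  obtain ⟨B₀, hB₀⟩ := exists_freqWeight_pow_mul_norm_realFourierCoeff_le (n := 5) hφ₀ hper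
  have hV : ∀ k, ContinuousOn (fun t => realFourierCoeff (W t) k) (Icc 0 T) := fun k =>
    (hW.continuous_realFourierCoeff k).continuousOn
  obtain ⟨c, hc₀, ⟨A, hcA⟩, hc⟩ := exists_heat_modes (n := 5) hν hT hV hB hB₀
  have hB₅ : ∀ t ∈ Icc 0 T, ∀ k, freqWeight k ^ 5 * ‖realFourierCoeff (W t) k‖ ≤ B :=
    fun t ht k => freqWeight_pow_mono (by norm_num) (hB t ht k)
  obtain ⟨hφ, hφx⟩ := periodicC12_fourierSum_of_heatRate hV hB₅ hcA hc
  refine ⟨_, _, _, _, (hφ.map Complex.reCLM).congr_time fun t ht x => ?_,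
    (hφx.map Complex.reCLM).congr_time fun t ht x => ?_, funext fun x => ?_⟩
  · have hrate := fourierSum_heatRate (ν := ν)
      (fun k => freqWeight_pow_mono (by norm_num) (hB₅ t ht k))
      (fun k => freqWeight_pow_mono (by norm_num) (hcA t ht k)) x
    rw [fourierSum_realFourierCoeff (hW.contDiff t 2) (hW.periodic t)] at hrate
    rw [hrate]
    simp
  · rw [fourierSum_fourierDiff_heatRate (hB₅ t ht) (hcA t ht),
      fourierSum_realFourierCoeff (hW.contDiff t 2) (hW.periodic t),
      fourierSum_fourierDiff_realFourierCoeff (hW.contDiff t 3) (hW.periodic t)]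
    simp
  · simp only [hc₀]
    rw [fourierSum_realFourierCoeff (hφ₀.of_le (by norm_num)) hper]
    simp

end HeatEquation

section Primitive

variable {f : ℝ → ℝ}

/-- The primitive of `f` vanishing at the origin. -/
noncomputable def primitive (f : ℝ → ℝ) (x : ℝ) : ℝ := ∫ y in (0 : ℝ)..x, f y

theorem hasDerivAt_primitive (hf : Continuous f) (x : ℝ) : HasDerivAt (primitive f) (f x) x :=
  (hf.integral_hasStrictDerivAt 0 x).hasDerivAt

theorem deriv_primitive (hf : Continuous f) : deriv (primitive f) = f :=
  funext fun x => (hasDerivAt_primitive hf x).deriv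

theorem contDiff_primitive {n : ℕ} (hf : ContDiff ℝ n f) : ContDiff ℝ (n + 1) (primitive f) := by
  refine contDiff_succ_iff_deriv.2
    ⟨fun x => (hasDerivAt_primitive hf.continuous x).differentiableAt, by simp, ?_⟩
  rwa [deriv_primitive hf.continuous]

theorem periodic_primitive {c : ℝ} (hf : Continuous f) (hper : Function.Periodic f c)
    (hmean : ∫ x in (0 : ℝ)..c, f x = 0) : Function.Periodic (primitive f) c := fun x => by
  have hperiod : ∫ y in x..x + c, f y = 0 := by
    rw [hper.intervalIntegral_add_eq x 0, zero_add, hmean]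
  rw [primitive, ← intervalIntegral.integral_add_adjacent_intervals
    (hf.intervalIntegrable 0 x) (hf.intervalIntegrable x (x + c)), hperiod, add_zero, primitive]

end Primitive

section SmoothInSpace

variable {F : ℝ → ℝ → ℝ}

theorem contDiff_uncurry_deriv (hF : ContDiff ℝ (⊤ : ℕ∞) fun p : ℝ × ℝ => F p.1 p.2) :
    ContDiff ℝ (⊤ : ℕ∞) fun p : ℝ × ℝ => deriv (F p.1) p.2 := by
  have hpartial (t x : ℝ) :
      HasDerivAt (F t) (fderiv ℝ (fun p : ℝ × ℝ => F p.1 p.2) (t, x) (0, 1)) x :=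
    (hF.differentiable (by simp) (t, x)).hasFDerivAt.comp_hasDerivAt x
      ((hasDerivAt_const x t).prodMk (hasDerivAt_id x))
  simp only [fun p : ℝ × ℝ => (hpartial p.1 p.2).deriv]
  exact (hF.fderiv_right (m := (⊤ : ℕ∞)) (by simp)).clm_apply contDiff_const

theorem contDiff_uncurry_iteratedDeriv (hF : ContDiff ℝ (⊤ : ℕ∞) fun p : ℝ × ℝ => F p.1 p.2)
    (n : ℕ) : ContDiff ℝ (⊤ : ℕ∞) fun p : ℝ × ℝ => iteratedDeriv n (F p.1) p.2 := by
  induction n with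
  | zero => simpa only [iteratedDeriv_zero] using hF
  | succ n ih =>
    simpa only [iteratedDeriv_succ] using
      contDiff_uncurry_deriv (F := fun t => iteratedDeriv n (F t)) ih

theorem isSmoothPeriodicInSpace_of_contDiff (hper : ∀ t, Function.Periodic (F t) 1)
    (hF : ContDiff ℝ (⊤ : ℕ∞) fun p : ℝ × ℝ => F p.1 p.2) : IsSmoothPeriodicInSpace F where
  periodic := hper
  contDiff t n := (hF.of_le (by exact_mod_cast le_top)).comp (contDiff_prodMk_right t)
  continuous_iteratedDeriv n := (contDiff_uncurry_iteratedDeriv hF n).continuous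

theorem IsSmoothPeriodicInSpace.const_mul (hF : IsSmoothPeriodicInSpace F) (r : ℝ) :
    IsSmoothPeriodicInSpace fun t x => r * F t x where
  periodic t := (hF.periodic t).comp fun y => r * y
  contDiff t n := contDiff_const.mul (hF.contDiff t n)
  continuous_iteratedDeriv n := by
    simp only [iteratedDeriv_const_mul_field]
    exact continuous_const.mul (hF.continuous_iteratedDeriv n)

theorem IsSmoothPeriodicInSpace.primitive (hF : IsSmoothPeriodicInSpace F)
    (hmean : ∀ t, ∫ x in (0 : ℝ)..1, F t x = 0) :
    IsSmoothPeriodicInSpace fun t => primitive (F t) where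
  periodic t := periodic_primitive (hF.contDiff t 0).continuous (hF.periodic t) (hmean t)
  contDiff t n := (contDiff_primitive (hF.contDiff t n)).of_le le_self_add
  continuous_iteratedDeriv n := by
    cases n with
    | zero =>
      simp only [iteratedDeriv_zero]
      exact intervalIntegral.continuous_parametric_primitive_of_continuous hF.continuous_uncurry
    | succ n =>
      simp only [iteratedDeriv_succ', deriv_primitive (hF.contDiff _ 0).continuous]
      exact hF.continuous_iteratedDeriv n

end SmoothInSpace

section ColeHopf

variable {ν T : ℝ}

theorem exists_isClassicalBurgersSolution_coleHopf {W φ φx φxx φxxx : ℝ → ℝ → ℝ} (hT : 0 ≤ T)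
    (hφ : PeriodicC12 T φ (fun t x => ν * φxx t x + W t x * φ t x) φx φxx)
    (hφx : PeriodicC12 T φx
      (fun t x => ν * φxxx t x + (deriv (W t) x * φ t x + W t x * φx t x)) φxx φxxx)
    (hne : ∀ t ∈ Icc 0 T, ∀ x, φ t x ≠ 0) :
    ∃ u, IsClassicalBurgersSolution ν T (fun t x => -2 * ν * deriv (W t) x)
        (fun x => -2 * ν * (φx 0 x / φ 0 x)) u ∧
      ∀ t ∈ Icc 0 T, u t = fun x => -2 * ν * (φx t x / φ t x) := by
  refine ((hφx.div hφ hne).map (ContinuousLinearMap.mul ℝ ℝ (-2 * ν)))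
    |>.exists_isClassicalBurgersSolution hT (fun t ht x => ?_) rfl
  have hφ_ne := hne t ht x
  simp only [ContinuousLinearMap.mul_apply']
  field_simp
  ring

theorem integral_deriv_div_eq_zero {f f' : ℝ → ℝ} {c : ℝ} (hf : ∀ x, HasDerivAt f (f' x) x)
    (hf' : Continuous f') (hne : ∀ x, f x ≠ 0) (hper : Function.Periodic f c) :
    ∫ x in (0 : ℝ)..c, f' x / f x = 0 := by
  have hcont : Continuous f := continuous_iff_continuousAt.2 fun x => (hf x).continuousAt
  rw [intervalIntegral.integral_eq_sub_of_hasDerivAt (fun x _ => (hf x).log (hne x))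
    ((hf'.div hcont hne).intervalIntegrable 0 c), hper.eq, sub_self]

theorem exists_isClassicalBurgersSolution_of_potential {W : ℝ → ℝ → ℝ} {g : ℝ → ℝ} (hν : 0 ≤ ν)
    (hT : 0 ≤ T) (hW : IsSmoothPeriodicInSpace W) (hg : ContDiff ℝ 5 g)
    (hg_per : Function.Periodic g 1) :
    ∃ u, IsClassicalBurgersSolution ν T (fun t x => -2 * ν * deriv (W t) x)
        (fun x => -2 * ν * deriv g x) u ∧
      ∀ t ∈ Icc 0 T, ∫ x in (0 : ℝ)..1, u t x = 0 := by
  have h0 : (0 : ℝ) ∈ Icc 0 T := left_mem_Icc.2 hT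
  obtain ⟨φ, φx, φxx, φxxx, hφ, hφx, hφ₀⟩ := exists_heat_equation_solution hν hT hW hg.exp
    (hg_per.comp Real.exp)
  obtain ⟨M, hM⟩ := hW.exists_abs_le T
  have hpos : ∀ t ∈ Icc 0 T, ∀ x, 0 < φ t x := fun t ht x =>
    hφ.pos_of_heat_equation hν hM (fun _ _ _ => rfl) (fun x => hφ₀ ▸ Real.exp_pos (g x)) ht x
  have hne : ∀ t ∈ Icc 0 T, ∀ x, φ t x ≠ 0 := fun t ht x => (hpos t ht x).ne'
  obtain ⟨u, hu, hut⟩ := exists_isClassicalBurgersSolution_coleHopf hT hφ hφx hne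
  have hinit : ∀ x, φx 0 x / φ 0 x = deriv g x := fun x => by
    have hexp := (hg.differentiable (by norm_num) x).hasDerivAt.exp
    have hspace := hφ.hasDerivAt_space 0 h0 x
    rw [hφ₀] at hspace ⊢
    rw [hspace.unique hexp, mul_div_cancel_left₀ _ (Real.exp_ne_zero _)]
  simp only [hinit] at hu
  refine ⟨u, hu, fun t ht => ?_⟩
  rw [hut t ht, intervalIntegral.integral_const_mul, integral_deriv_div_eq_zero
    (hφ.hasDerivAt_space t ht) (continuous_iff_continuousAt.2 fun x =>
      (hφ.hasDerivAt_space₂ t ht x).continuousAt) (hne t ht) (hφ.periodic t ht), mul_zero]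

theorem exists_isClassicalBurgersSolution_of_mean_zero {u₀ : ℝ → ℝ} {η : ℝ → ℝ → ℝ} (hν : 0 < ν)
    (hT : 0 ≤ T) (hu₀ : ContDiff ℝ 4 u₀) (hu₀_per : Function.Periodic u₀ 1)
    (hu₀_mean : ∫ x in (0 : ℝ)..1, u₀ x = 0) (hη : IsSmoothPeriodicInSpace η)
    (hη_mean : ∀ t, ∫ x in (0 : ℝ)..1, η t x = 0) :
    ∃ u, IsClassicalBurgersSolution ν T η u₀ u ∧
      ∀ t ∈ Icc 0 T, ∫ x in (0 : ℝ)..1, u t x = 0 := by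
  have hcancel (y : ℝ) : -2 * ν * ((-2 * ν)⁻¹ * y) = y := mul_inv_cancel_left₀ (by linarith) y
  have hW := (hη.primitive hη_mean).const_mul (-2 * ν)⁻¹
  have hg : ContDiff ℝ 5 fun x => (-2 * ν)⁻¹ * primitive u₀ x :=
    contDiff_const.mul (contDiff_primitive (n := 4) hu₀)
  have hg_per : Function.Periodic (fun x => (-2 * ν)⁻¹ * primitive u₀ x) 1 :=
    (periodic_primitive hu₀.continuous hu₀_per hu₀_mean).comp fun y => (-2 * ν)⁻¹ * y
  obtain ⟨u, hu⟩ := exists_isClassicalBurgersSolution_of_potential hν.le hT hW hg hg_per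
  simp only [deriv_const_mul_field, deriv_primitive (hη.contDiff _ 0).continuous,
    deriv_primitive hu₀.continuous, hcancel] at hu
  exact ⟨u, hu⟩

end ColeHopf

theorem stmt_4_general {ν T : ℝ} {u₀ : ℝ → ℝ} {η : ℝ → ℝ → ℝ} (hν : 0 < ν) (hT : 0 ≤ T)
    (hu₀_per : Function.Periodic u₀ 1) (hu₀ : ContDiff ℝ 4 u₀)
    (hu₀_mean : ∫ x in (0 : ℝ)..1, u₀ x = 0) (hη : IsSmoothPeriodicInSpace η)
    (hη_mean : ∀ t, ∫ x in (0 : ℝ)..1, η t x = 0) :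
    ∃ u, IsClassicalBurgersSolution ν T η u₀ u ∧
      (∀ t ∈ Icc 0 T, ∫ x in (0 : ℝ)..1, u t x = 0) ∧
      ∀ u', IsClassicalBurgersSolution ν T η u₀ u' → ∀ t ∈ Icc 0 T, ∀ x, u' t x = u t x := by
  obtain ⟨u, hu, hmean⟩ :=
    exists_isClassicalBurgersSolution_of_mean_zero hν hT hu₀ hu₀_per hu₀_mean hη hη_mean
  exact ⟨u, hu, hmean, fun u' hu' t ht x => hu'.unique hν.le hu ht x⟩

/-- Well-posedness of the periodic viscous Burgers equation with smooth mean-zero data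
(Theorem 3.4 together with Lemma 3.1 and Theorem 3.8 of the paper): there is exactly one
classical solution on `[0,T] × S¹`, and it has zero spatial mean for all times. -/
theorem stmt_4 (ν T : ℝ) (hν : 0 < ν) (hT : 0 < T)
    (u₀ : ℝ → ℝ) (hu₀_per : Function.Periodic u₀ 1) (hu₀ : ContDiff ℝ (⊤ : ℕ∞) u₀)
    (hu₀_mean : ∫ x in (0:ℝ)..1, u₀ x = 0)
    (η : ℝ → ℝ → ℝ) (hη_per : ∀ t, Function.Periodic (η t) 1)
    (hη : ContDiff ℝ (⊤ : ℕ∞) (fun p : ℝ × ℝ => η p.1 p.2))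
    (hη_mean : ∀ t : ℝ, ∫ x in (0:ℝ)..1, η t x = 0) :
    ∃ u : ℝ → ℝ → ℝ, IsClassicalBurgersSolution ν T η u₀ u ∧
      (∀ t ∈ Icc (0:ℝ) T, ∫ x in (0:ℝ)..1, u t x = 0) ∧
      ∀ u' : ℝ → ℝ → ℝ, IsClassicalBurgersSolution ν T η u₀ u' →
        ∀ t ∈ Icc (0:ℝ) T, ∀ x : ℝ, u' t x = u t x :=
  stmt_4_general hν hT.le hu₀_per (contDiff_infty.1 hu₀ 4) hu₀_mean
    (isSmoothPeriodicInSpace_of_contDiff hη_per hη) hη_mean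
end

section
/- Let ν > 0 and T > 0. Let u₁, u₂ : [0,T] × S¹ → ℝ be continuous with continuous space derivatives ∂_x u₁, ∂_x u₂, and suppose the difference w := u₁ − u₂ has continuous derivatives ∂_t w, ∂_x w, ∂_x² w on [0,T] × S¹ and satisfies pointwise ∂_t w + (1/2)·∂_x((u₁ + u₂)·w) − ν·∂_x² w = 0 on [0,T] × S¹. Then for every t ∈ [0,T], ∫_{S¹} |u₁(t,x) − u₂(t,x)| dx ≤ ∫_{S¹} |u₁(0,x) − u₂(0,x)| dx. -/
open Set

/-!
Write `c = (u₁ + u₂) / 2`, so that `w_t + (c w)_x = ν w_xx`. For a convex entropy `η`, multiplying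
by `η'(w)` gives
`∂ₜ η(w) = ∂ₓ(ν η'(w) w_x - c η(w)) - ν η''(w) w_x² + c_x (η(w) - w η'(w))`.
Integrating over a period kills the flux, and the diffusion term has a sign. For
`η(z) = √(z² + ε²)` the defect `η(z) - z η'(z) = ε² / η(z)` lies in `[0, ε]`, so `∫ η(w)` grows at
most at rate `ε ∫ |c_x|`; since `η → |·|` uniformly as `ε → 0`, the claim follows.
-/

open Function MeasureTheory intervalIntegral

theorem periodic_deriv_s6 {𝕜 F : Type*} [NontriviallyNormedField 𝕜] [NormedAddCommGroup F]
    [NormedSpace 𝕜 F] {f : 𝕜 → F} {L : 𝕜} (hf : Periodic f L) : Periodic (deriv f) L := by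
  intro x
  rw [← deriv_comp_add_const, funext hf]

section DifferentiationUnderTheIntegral

variable {E : Type*} [NormedAddCommGroup E] {f : ℝ → ℝ → E} {a b c d : ℝ}

theorem integrableOn_uIoc_prod_of_continuousOn
    (hf : ContinuousOn (uncurry f) (uIcc a b ×ˢ uIcc c d)) :
    IntegrableOn (uncurry f) (uIoc a b ×ˢ uIoc c d) :=
  (hf.integrableOn_compact (isCompact_uIcc.prod isCompact_uIcc)).mono_set
    (prod_mono uIoc_subset_uIcc uIoc_subset_uIcc)

variable [NormedSpace ℝ E]

theorem intervalIntegrable_integral_of_continuousOn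
    (hf : ContinuousOn (uncurry f) (uIcc a b ×ˢ uIcc c d)) :
    IntervalIntegrable (fun s => ∫ x in c..d, f s x) volume a b := by
  have hint := integrableOn_uIoc_prod_of_continuousOn hf
  rw [IntegrableOn, Measure.volume_eq_prod, ← Measure.prod_restrict] at hint
  simp only [intervalIntegrable_iff, intervalIntegral_eq_integral_uIoc]
  exact hint.integral_prod_left.smul _

theorem integral_integral_deriv_eq_sub [CompleteSpace E] {f' : ℝ → ℝ → E}
    (hf : ∀ s ∈ uIcc a b, ∀ x ∈ uIcc c d, HasDerivAt (fun r => f r x) (f' s x) s)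
    (hf' : ContinuousOn (uncurry f') (uIcc a b ×ˢ uIcc c d))
    (hfa : IntervalIntegrable (f a) volume c d) (hfb : IntervalIntegrable (f b) volume c d) :
    ∫ s in a..b, ∫ x in c..d, f' s x = (∫ x in c..d, f b x) - ∫ x in c..d, f a x := by
  rw [intervalIntegral_intervalIntegral_swap (integrableOn_uIoc_prod_of_continuousOn hf'),
    ← integral_sub hfb hfa]
  refine integral_congr fun x hx => integral_eq_sub_of_hasDerivAt (fun s hs => hf s hs x hx) ?_
  exact (hf'.uncurry_right x hx).intervalIntegrable

end DifferentiationUnderTheIntegral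

theorem integral_le_integral_add_of_integral_deriv_le {f f' : ℝ → ℝ → ℝ} {a b c d K : ℝ}
    (hab : a ≤ b)
    (hf : ∀ s ∈ Icc a b, ∀ x ∈ uIcc c d, HasDerivAt (fun r => f r x) (f' s x) s)
    (hf' : ContinuousOn (uncurry f') (Icc a b ×ˢ uIcc c d))
    (hfa : IntervalIntegrable (f a) volume c d) (hfb : IntervalIntegrable (f b) volume c d)
    (hK : ∀ s ∈ Icc a b, ∫ x in c..d, f' s x ≤ K) :
    ∫ x in c..d, f b x ≤ (∫ x in c..d, f a x) + K * (b - a) := by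
  rw [← uIcc_of_le hab] at hf hf'
  have hle : ∫ s in a..b, ∫ x in c..d, f' s x ≤ ∫ _ in a..b, K :=
    integral_mono_on hab (intervalIntegrable_integral_of_continuousOn hf')
      intervalIntegrable_const hK
  rw [integral_integral_deriv_eq_sub hf hf' hfa hfb, intervalIntegral.integral_const,
    smul_eq_mul] at hle
  linarith

/-- The regularization `√(z² + ε²)` of `|z|`, used as a convex entropy that is smooth for
`ε ≠ 0`. -/
noncomputable def smoothAbs (ε z : ℝ) : ℝ := √(z ^ 2 + ε ^ 2)

namespace smoothAbs

variable (ε z : ℝ)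

theorem sq_eq : smoothAbs ε z ^ 2 = z ^ 2 + ε ^ 2 := Real.sq_sqrt (by positivity)

theorem continuous : Continuous (smoothAbs ε) := by unfold smoothAbs; fun_prop

theorem abs_le : |z| ≤ smoothAbs ε z :=
  Real.abs_le_sqrt (le_add_of_nonneg_right (sq_nonneg ε))

theorem self_le : ε ≤ smoothAbs ε z :=
  Real.le_sqrt_of_sq_le (le_add_of_nonneg_left (sq_nonneg z))

variable {ε}

theorem le_abs_add (hε : 0 ≤ ε) : smoothAbs ε z ≤ |z| + ε := by
  refine Real.sqrt_le_iff.2 ⟨by positivity, ?_⟩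
  nlinarith [sq_abs z, mul_nonneg (abs_nonneg z) hε]

theorem pos (hε : 0 < ε) : 0 < smoothAbs ε z := hε.trans_le (self_le ε z)

theorem hasDerivAt (hε : 0 < ε) : HasDerivAt (smoothAbs ε) (z / smoothAbs ε z) z := by
  have hsq : HasDerivAt (fun y : ℝ => y ^ 2 + ε ^ 2) (2 * z) z := by
    simpa using (hasDerivAt_pow 2 z).add_const (ε ^ 2)
  have hsqrt : HasDerivAt (smoothAbs ε) (2 * z / (2 * smoothAbs ε z)) z :=
    hsq.sqrt (by positivity)
  rwa [mul_div_mul_left _ _ two_ne_zero] at hsqrt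

theorem sub_mul_div_eq (hε : 0 < ε) :
    smoothAbs ε z - z * (z / smoothAbs ε z) = ε ^ 2 / smoothAbs ε z := by
  have hpos := pos z hε
  field_simp
  linarith [sq_eq ε z]

theorem abs_sub_mul_div_le (hε : 0 < ε) :
    |smoothAbs ε z - z * (z / smoothAbs ε z)| ≤ ε := by
  have hpos := pos z hε
  rw [sub_mul_div_eq z hε, abs_of_nonneg (by positivity), div_le_iff₀ hpos, sq]
  exact mul_le_mul_of_nonneg_left (self_le ε z) hε.le

theorem hasDerivAt_div (hε : 0 < ε) :
    HasDerivAt (fun y => y / smoothAbs ε y) (ε ^ 2 / smoothAbs ε z ^ 3) z := by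
  have hquot := (hasDerivAt_id' z).fun_div (hasDerivAt z hε) (pos z hε).ne'
  rwa [one_mul, sub_mul_div_eq z hε, div_div, ← pow_succ'] at hquot

theorem continuous_div (hε : 0 < ε) : Continuous fun z => z / smoothAbs ε z :=
  continuous_id.div (continuous ε) fun z => (pos z hε).ne'

end smoothAbs

theorem integral_abs_le_of_integral_smoothAbs_le {f g : ℝ → ℝ} {a b ε C : ℝ} (hε : 0 ≤ ε)
    (hab : a ≤ b) (hf : Continuous f) (hg : Continuous g)
    (h : ∫ x in a..b, smoothAbs ε (f x) ≤ (∫ x in a..b, smoothAbs ε (g x)) + C) :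
    ∫ x in a..b, |f x| ≤ (∫ x in a..b, |g x|) + (ε * (b - a) + C) := by
  have hSf := ((smoothAbs.continuous ε).comp hf).intervalIntegrable (μ := volume) a b
  have hSg := ((smoothAbs.continuous ε).comp hg).intervalIntegrable (μ := volume) a b
  have hg_abs := hg.abs.intervalIntegrable (μ := volume) a b
  calc ∫ x in a..b, |f x|
      ≤ ∫ x in a..b, smoothAbs ε (f x) :=
        integral_mono hab (hf.abs.intervalIntegrable a b) hSf fun x => smoothAbs.abs_le ε (f x)
    _ ≤ (∫ x in a..b, smoothAbs ε (g x)) + C := h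
    _ ≤ (∫ x in a..b, (|g x| + ε)) + C := by
        gcongr
        exact integral_mono hab hSg (hg_abs.add intervalIntegrable_const)
          fun x => smoothAbs.le_abs_add (g x) hε
    _ = (∫ x in a..b, |g x|) + (ε * (b - a) + C) := by
        rw [integral_add hg_abs intervalIntegrable_const, intervalIntegral.integral_const,
          smul_eq_mul]
        ring

section DriftDiffusion

variable {ν L : ℝ}

theorem hasDerivAt_entropy_flux {w w' c η η' : ℝ → ℝ} {x w'' c' η'' r : ℝ}
    (hη : HasDerivAt η (η' (w x)) (w x)) (hη' : HasDerivAt η' η'' (w x))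
    (hw : HasDerivAt w (w' x) x) (hw' : HasDerivAt w' w'' x) (hc : HasDerivAt c c' x)
    (heq : r + (c' * w x + c x * w' x) = ν * w'') :
    HasDerivAt (fun y => ν * (η' (w y) * w' y) - c y * η (w y))
      (η' (w x) * r - c' * (η (w x) - w x * η' (w x)) + ν * (η'' * w' x ^ 2)) x := by
  have hflux : HasDerivAt (fun y => ν * (η' (w y) * w' y) - c y * η (w y)) _ x :=
    (((hη'.comp x hw).mul hw').const_mul ν).sub (hc.mul (hη.comp x hw))
  convert hflux using 1
  simp only [comp_apply]
  linear_combination η' (w x) * heq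

theorem integral_entropy_production_le {w c r η η' η'' : ℝ → ℝ} (hν : 0 ≤ ν) (hL : 0 ≤ L)
    (hη : ∀ z, HasDerivAt η (η' z) z) (hη' : ∀ z, HasDerivAt η' (η'' z) z)
    (hη'' : ∀ z, 0 ≤ η'' z)
    (hw_per : Periodic w L) (hc_per : Periodic c L)
    (hw : Differentiable ℝ w) (hw_x : Differentiable ℝ (deriv w)) (hc : Differentiable ℝ c)
    (hc_x : Continuous (deriv c)) (hr : Continuous r)
    (heq : ∀ x, r x + deriv (fun y => c y * w y) x = ν * deriv (deriv w) x) :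
    ∫ x in 0..L, η' (w x) * r x ≤ ∫ x in 0..L, deriv c x * (η (w x) - w x * η' (w x)) := by
  have hηw : Continuous fun x => η (w x) :=
    (Differentiable.continuous fun z => (hη z).differentiableAt).comp hw.continuous
  have hη'w : Continuous fun x => η' (w x) :=
    (Differentiable.continuous fun z => (hη' z).differentiableAt).comp hw.continuous
  have hprod : Continuous fun x => η' (w x) * r x := hη'w.mul hr
  have hdefect : Continuous fun x => deriv c x * (η (w x) - w x * η' (w x)) :=
    hc_x.mul (hηw.sub (hw.continuous.mul hη'w))
  let flux : ℝ → ℝ := fun x => ν * (η' (w x) * deriv w x) - c x * η (w x)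
  have hflux (x : ℝ) : HasDerivAt flux
      (η' (w x) * r x - deriv c x * (η (w x) - w x * η' (w x))
        + ν * (η'' (w x) * deriv w x ^ 2)) x :=
    hasDerivAt_entropy_flux (hη (w x)) (hη' (w x)) (hw x).hasDerivAt (hw_x x).hasDerivAt
      (hc x).hasDerivAt (by rw [← deriv_fun_mul (hc x) (hw x), heq x])
  have hflux_per : flux L = flux 0 := by
    simp only [flux, hw_per.eq, hc_per.eq, (periodic_deriv_s6 hw_per).eq]
  have hdissipation (x : ℝ) : 0 ≤ ν * (η'' (w x) * deriv w x ^ 2) :=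
    mul_nonneg hν (mul_nonneg (hη'' _) (sq_nonneg _))
  have hle : ∫ x in 0..L, (η' (w x) * r x - deriv c x * (η (w x) - w x * η' (w x)))
      ≤ flux L - flux 0 :=
    integral_le_sub_of_hasDeriv_right_of_le hL
      (fun x _ => (hflux x).continuousAt.continuousWithinAt)
      (fun x _ => (hflux x).hasDerivWithinAt)
      (hprod.sub hdefect).continuousOn.integrableOn_Icc
      (fun x _ => le_add_of_nonneg_right (hdissipation x))
  rw [hflux_per, sub_self, integral_sub (hprod.intervalIntegrable 0 L)
    (hdefect.intervalIntegrable 0 L)] at hle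
  exact sub_nonpos.1 hle

theorem integral_smoothAbs_production_le {w c r : ℝ → ℝ} {ε K : ℝ} (hε : 0 < ε) (hν : 0 ≤ ν)
    (hL : 0 ≤ L) (hw_per : Periodic w L) (hc_per : Periodic c L)
    (hw : Differentiable ℝ w) (hw_x : Differentiable ℝ (deriv w)) (hc : Differentiable ℝ c)
    (hc_x : Continuous (deriv c)) (hr : Continuous r)
    (heq : ∀ x, r x + deriv (fun y => c y * w y) x = ν * deriv (deriv w) x)
    (hK : ∀ x ∈ Icc 0 L, |deriv c x| ≤ K) :
    ∫ x in 0..L, w x / smoothAbs ε (w x) * r x ≤ K * ε * L := by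
  have hdefect (x : ℝ) (hx : x ∈ uIoc 0 L) :
      ‖deriv c x * (smoothAbs ε (w x) - w x * (w x / smoothAbs ε (w x)))‖ ≤ K * ε := by
    rw [uIoc_of_le hL] at hx
    have hKx := hK x (Ioc_subset_Icc_self hx)
    rw [norm_mul]
    exact mul_le_mul hKx (smoothAbs.abs_sub_mul_div_le _ hε) (norm_nonneg _)
      ((abs_nonneg _).trans hKx)
  calc ∫ x in 0..L, w x / smoothAbs ε (w x) * r x
      ≤ ∫ x in 0..L, deriv c x * (smoothAbs ε (w x) - w x * (w x / smoothAbs ε (w x))) :=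
        integral_entropy_production_le hν hL (smoothAbs.hasDerivAt · hε)
          (smoothAbs.hasDerivAt_div · hε)
          (fun z => div_nonneg (sq_nonneg ε) (pow_nonneg (smoothAbs.pos z hε).le 3))
          hw_per hc_per hw hw_x hc hc_x hr heq
    _ ≤ K * ε * |L - 0| := (Real.le_norm_self _).trans (norm_integral_le_of_norm_le_const hdefect)
    _ = K * ε * L := by rw [sub_zero, abs_of_nonneg hL]

theorem antitoneOn_integral_abs_of_drift_diffusion {I : Set ℝ} {w c : ℝ → ℝ → ℝ} (hν : 0 ≤ ν)
    (hL : 0 ≤ L) (hI : I.OrdConnected)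
    (hw_per : ∀ t ∈ I, Periodic (w t) L) (hc_per : ∀ t ∈ I, Periodic (c t) L)
    (hw_cont : ContinuousOn (uncurry w) (I ×ˢ univ))
    (hw_t : ∀ x, ∀ t ∈ I, DifferentiableAt ℝ (fun s => w s x) t)
    (hw_t_cont : ContinuousOn (uncurry fun t x => deriv (fun s => w s x) t) (I ×ˢ univ))
    (hw : ∀ t ∈ I, Differentiable ℝ (w t)) (hw_x : ∀ t ∈ I, Differentiable ℝ (deriv (w t)))
    (hc : ∀ t ∈ I, Differentiable ℝ (c t))
    (hc_x_cont : ContinuousOn (uncurry fun t => deriv (c t)) (I ×ˢ univ))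
    (heq : ∀ t ∈ I, ∀ x, deriv (fun s => w s x) t + deriv (fun y => c t y * w t y) x =
      ν * deriv (deriv (w t)) x) :
    AntitoneOn (fun t => ∫ x in 0..L, |w t x|) I := by
  intro s hs t ht hst
  have hst_sub : Icc s t ⊆ I := hI.out hs ht
  have hrect : Icc s t ×ˢ uIcc 0 L ⊆ I ×ˢ univ := prod_mono hst_sub (subset_univ _)
  obtain ⟨K, hK⟩ := (isCompact_Icc.prod isCompact_uIcc).exists_bound_of_continuousOn
    (hc_x_cont.mono hrect)
  have hbound (ε : ℝ) (hε : 0 < ε) : ∫ x in 0..L, |w t x| ≤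
      (∫ x in 0..L, |w s x|) + (ε * (L - 0) + K * ε * L * (t - s)) := by
    refine integral_abs_le_of_integral_smoothAbs_le hε.le hL (hw t ht).continuous
      (hw s hs).continuous ?_
    refine integral_le_integral_add_of_integral_deriv_le (f := fun τ x => smoothAbs ε (w τ x))
      (f' := fun τ x => w τ x / smoothAbs ε (w τ x) * deriv (fun r => w r x) τ) hst ?_ ?_
      (((smoothAbs.continuous ε).comp (hw s hs).continuous).intervalIntegrable 0 L)
      (((smoothAbs.continuous ε).comp (hw t ht).continuous).intervalIntegrable 0 L) ?_
    · exact fun τ hτ x _ => (smoothAbs.hasDerivAt (w τ x) hε).comp (h := fun r => w r x) τ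
        (hw_t x τ (hst_sub hτ)).hasDerivAt
    · exact (((smoothAbs.continuous_div hε).comp_continuousOn hw_cont).mul hw_t_cont).mono hrect
    · intro τ hτ
      have hτI := hst_sub hτ
      exact integral_smoothAbs_production_le hε hν hL (hw_per τ hτI) (hc_per τ hτI) (hw τ hτI)
        (hw_x τ hτI) (hc τ hτI) (continuousOn_univ.1 (hc_x_cont.uncurry_left τ hτI))
        (continuousOn_univ.1 (hw_t_cont.uncurry_left τ hτI)) (heq τ hτI)
        fun x hx => hK (τ, x) ⟨hτ, Icc_subset_uIcc hx⟩
  have hlim : Filter.Tendsto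
      (fun ε => (∫ x in 0..L, |w s x|) + (ε * (L - 0) + K * ε * L * (t - s)))
      (nhdsWithin 0 (Ioi 0)) (nhds (∫ x in 0..L, |w s x|)) :=
    tendsto_nhdsWithin_of_tendsto_nhds (Continuous.tendsto' (by fun_prop) _ _ (by simp))
  exact ge_of_tendsto hlim (Filter.eventually_of_mem self_mem_nhdsWithin hbound)

end DriftDiffusion

theorem stmt_6_general {ν L : ℝ} (hν : 0 ≤ ν) (hL : 0 ≤ L) {I : Set ℝ} (hI : I.OrdConnected)
    {u₁ u₂ : ℝ → ℝ → ℝ}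
    (h₁_per : ∀ t ∈ I, Periodic (u₁ t) L) (h₂_per : ∀ t ∈ I, Periodic (u₂ t) L)
    (h₁_x : ∀ t ∈ I, Differentiable ℝ (u₁ t)) (h₂_x : ∀ t ∈ I, Differentiable ℝ (u₂ t))
    (h₁_x_cont : ContinuousOn (fun p : ℝ × ℝ => deriv (u₁ p.1) p.2) (I ×ˢ univ))
    (h₂_x_cont : ContinuousOn (fun p : ℝ × ℝ => deriv (u₂ p.1) p.2) (I ×ˢ univ))
    (hw_cont : ContinuousOn (fun p : ℝ × ℝ => u₁ p.1 p.2 - u₂ p.1 p.2) (I ×ˢ univ))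
    (hw_t : ∀ x, ∀ t ∈ I, DifferentiableAt ℝ (fun s => u₁ s x - u₂ s x) t)
    (hw_t_cont : ContinuousOn (fun p : ℝ × ℝ => deriv (fun s => u₁ s p.2 - u₂ s p.2) p.1)
      (I ×ˢ univ))
    (hw_xx : ∀ t ∈ I, Differentiable ℝ (deriv fun y => u₁ t y - u₂ t y))
    (heq : ∀ t ∈ I, ∀ x,
      deriv (fun s => u₁ s x - u₂ s x) t
        + (1 / 2) * deriv (fun y => (u₁ t y + u₂ t y) * (u₁ t y - u₂ t y)) x
        - ν * deriv (deriv fun y => u₁ t y - u₂ t y) x = 0) :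
    AntitoneOn (fun t => ∫ x in 0..L, |u₁ t x - u₂ t x|) I := by
  refine antitoneOn_integral_abs_of_drift_diffusion hν hL hI
    (c := fun t x => 1 / 2 * (u₁ t x + u₂ t x))
    (fun t ht => (h₁_per t ht).sub (h₂_per t ht))
    (fun t ht x => congrArg (1 / 2 * ·) ((h₁_per t ht).add (h₂_per t ht) x))
    hw_cont hw_t hw_t_cont (fun t ht => (h₁_x t ht).sub (h₂_x t ht)) hw_xx
    (fun t ht => ((h₁_x t ht).add (h₂_x t ht)).const_mul (1 / 2)) ?_ ?_
  · refine (continuousOn_const.mul (h₁_x_cont.add h₂_x_cont)).congr (f := fun p => 1 / 2 * _) ?_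
    rintro ⟨t, x⟩ ⟨ht, -⟩
    have hsum := ((h₁_x t ht x).hasDerivAt.add (h₂_x t ht x).hasDerivAt).const_mul (1 / 2 : ℝ)
    exact hsum.deriv
  · intro t ht x
    simp only [mul_assoc, deriv_const_mul_field']
    exact sub_eq_zero.1 (heq t ht x)

/-- L¹-contraction (Lemma 10.4 of the paper): if the difference `w = u₁ − u₂` of two
functions on `[0,T] × S¹` (S¹ = ℝ/ℤ, functions 1-periodic in space) classically solves
`w_t + (1/2)((u₁+u₂)w)_x − ν w_xx = 0`, then the L¹-distance between `u₁(t,·)` and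
`u₂(t,·)` is bounded by its value at `t = 0`. -/
theorem stmt_6 (ν T : ℝ) (hν : 0 < ν) (hT : 0 < T)
    (u₁ u₂ : ℝ → ℝ → ℝ)
    -- regularity of u₁, u₂ : continuous with continuous ∂ₓu₁, ∂ₓu₂ on [0,T] × S¹
    (h₁_per : ∀ t, Function.Periodic (u₁ t) 1)
    (h₂_per : ∀ t, Function.Periodic (u₂ t) 1)
    (h₁_cont : ContinuousOn (fun p : ℝ × ℝ => u₁ p.1 p.2) (Icc 0 T ×ˢ univ))
    (h₂_cont : ContinuousOn (fun p : ℝ × ℝ => u₂ p.1 p.2) (Icc 0 T ×ˢ univ))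
    (h₁_x : ∀ t ∈ Icc (0:ℝ) T, Differentiable ℝ (u₁ t))
    (h₂_x : ∀ t ∈ Icc (0:ℝ) T, Differentiable ℝ (u₂ t))
    (h₁_x_cont : ContinuousOn (fun p : ℝ × ℝ => deriv (u₁ p.1) p.2) (Icc 0 T ×ˢ univ))
    (h₂_x_cont : ContinuousOn (fun p : ℝ × ℝ => deriv (u₂ p.1) p.2) (Icc 0 T ×ˢ univ))
    -- w = u₁ − u₂ has continuous ∂ₜw, ∂ₓw, ∂ₓ²w on [0,T] × S¹
    (hw_t : ∀ x : ℝ, ∀ t ∈ Icc (0:ℝ) T, DifferentiableAt ℝ (fun s => u₁ s x - u₂ s x) t)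
    (hw_t_cont : ContinuousOn (fun p : ℝ × ℝ => deriv (fun s => u₁ s p.2 - u₂ s p.2) p.1)
      (Icc 0 T ×ˢ univ))
    (hw_x : ∀ t ∈ Icc (0:ℝ) T, Differentiable ℝ (fun y => u₁ t y - u₂ t y) ∧
      Differentiable ℝ (deriv (fun y => u₁ t y - u₂ t y)))
    (hw_x_cont : ContinuousOn
      (fun p : ℝ × ℝ => deriv (fun y => u₁ p.1 y - u₂ p.1 y) p.2) (Icc 0 T ×ˢ univ))
    (hw_xx_cont : ContinuousOn
      (fun p : ℝ × ℝ => deriv (deriv (fun y => u₁ p.1 y - u₂ p.1 y)) p.2)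
      (Icc 0 T ×ˢ univ))
    -- the equation w_t + (1/2)((u₁+u₂)w)_x − ν w_xx = 0 holds pointwise on [0,T] × S¹
    (heq : ∀ t ∈ Icc (0:ℝ) T, ∀ x : ℝ,
      deriv (fun s => u₁ s x - u₂ s x) t
        + (1 / 2) * deriv (fun y => (u₁ t y + u₂ t y) * (u₁ t y - u₂ t y)) x
        - ν * deriv (deriv (fun y => u₁ t y - u₂ t y)) x = 0) :
    ∀ t ∈ Icc (0:ℝ) T,
      (∫ x in (0:ℝ)..1, |u₁ t x - u₂ t x|) ≤ ∫ x in (0:ℝ)..1, |u₁ 0 x - u₂ 0 x| :=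
  fun _ ht => stmt_6_general hν.le zero_le_one ordConnected_Icc (fun t _ => h₁_per t)
    (fun t _ => h₂_per t) h₁_x h₂_x h₁_x_cont h₂_x_cont (h₁_cont.sub h₂_cont) hw_t hw_t_cont
    (fun t ht => (hw_x t ht).2) heq (left_mem_Icc.2 hT.le) ht ht.1
end
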